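/- arXiv:2410.20093 — 3 statements merged into one kernel-verified Lean document; each statement's English description precedes it below -/
import Mathlib

section
/- Let f : ℝ → ℂ be Lipschitz with f(±∞) = 0 and |f'(p)| ≤ C (1+|p|)^{-(1+ε)} for some 0 < ε < 1. Then the inverse Fourier transform of f (a priori a tempered distribution) is represented by a function V that is continuous on ℝ \ {0} and satisfies |V(r)| ≤ C' |r|^{ε-1} for all r ≠ 0. -/
open Filter Real Topology MeasureTheory

namespace Stmt3Aux

/-- `|u|^a` is locally integrable for `-1 < a`. -/
lemma locInt_rpow {a : ℝ} (ha : -1 < a) :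
    LocallyIntegrable (fun u : ℝ => |u| ^ a) := by
  refine locallyIntegrable_of_norm_le_rpow (E := ℝ) (C := 1) (α := -a) (by simp) ?_ ?_ ?_
  · simp; linarith
  · refine Eventually.of_forall fun x => ?_
    rw [neg_neg, one_mul, Real.norm_of_nonneg (by positivity), Real.norm_eq_abs]
  · apply Measurable.aestronglyMeasurable; fun_prop

lemma int_kernel {ε : ℝ} (hε0 : 0 < ε) (hε1 : ε < 1) :
    Integrable (fun u : ℝ => |u| ^ (-(1 + ε)) * min 2 |u|) := by
  have h1 : Integrable ((Set.Icc (-1:ℝ) 1).indicator (fun u : ℝ => |u| ^ (-ε))) := by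
    rw [integrable_indicator_iff measurableSet_Icc]
    exact (locInt_rpow (by linarith)).integrableOn_isCompact isCompact_Icc
  have h2 : Integrable (fun u : ℝ => (2 * 2 ^ (1 + ε)) * (1 + ‖u‖) ^ (-(1 + ε))) :=
    (integrable_one_add_norm (by simpa using hε0)).const_mul _
  refine (h1.add h2).mono' (by fun_prop) (Eventually.of_forall fun u => ?_)
  have hn : 0 ≤ |u| ^ (-(1 + ε)) * min 2 |u| := by positivity
  rw [Real.norm_of_nonneg hn, Pi.add_apply]
  by_cases hu : u ∈ Set.Icc (-1:ℝ) 1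
  · rw [Set.indicator_of_mem hu]
    refine le_add_of_le_of_nonneg ?_ (by positivity)
    rcases eq_or_ne u 0 with rfl | h0
    · simp; positivity
    · calc |u| ^ (-(1 + ε)) * min 2 |u| ≤ |u| ^ (-(1 + ε)) * |u| := by
            gcongr; exact min_le_right _ _
        _ = |u| ^ (-ε) := by
            rw [← Real.rpow_add_one (by positivity)]; congr 1; ring
  · rw [Set.indicator_of_notMem hu, zero_add]
    have h1 : 1 < |u| := by
      by_contra! h
      exact hu (abs_le.mp h)
    have h3 : |u| ^ (-(1 + ε)) ≤ 2 ^ (1 + ε) * (1 + ‖u‖) ^ (-(1 + ε)) := by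
      have : (2:ℝ) ^ (1 + ε) = (2⁻¹ : ℝ) ^ (-(1+ε)) := by
        rw [Real.rpow_neg (by positivity), Real.inv_rpow (by positivity), inv_inv]
      rw [this, ← Real.mul_rpow (by positivity) (by positivity)]
      refine Real.rpow_le_rpow_of_nonpos (by positivity) ?_ (by linarith)
      rw [Real.norm_eq_abs]; linarith
    calc |u| ^ (-(1 + ε)) * min 2 |u| ≤ (2 ^ (1 + ε) * (1 + ‖u‖) ^ (-(1 + ε))) * 2 := by
          gcongr; exact min_le_left _ _
      _ = _ := by ring

/-- pointwise bound on the kernel -/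
lemma kernel_bound (x : ℝ) : ‖Complex.exp (Complex.I * x) - 1‖ ≤ min 2 |x| := by
  refine le_min ?_ Real.norm_exp_I_mul_ofReal_sub_one_le
  calc _ ≤ ‖Complex.exp (Complex.I * x)‖ + ‖(1:ℂ)‖ := norm_sub_le _ _
    _ = 2 := by rw [Complex.norm_exp_I_mul_ofReal]; norm_num

lemma scaled {ε : ℝ} (r : ℝ) (hr : r ≠ 0) (p : ℝ) :
    |p| ^ (-(1 + ε)) * min 2 |p * r| =
      |r| ^ (1 + ε) * (|p * r| ^ (-(1 + ε)) * min 2 |p * r|) := by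
  rw [abs_mul, Real.mul_rpow (by positivity) (by positivity), Real.rpow_neg (abs_nonneg r)]
  have : |r| ^ (1 + ε) ≠ 0 := by positivity
  field_simp

lemma int_scaled {ε : ℝ} (hε0 : 0 < ε) (hε1 : ε < 1) (r : ℝ) (hr : r ≠ 0) :
    Integrable (fun p : ℝ => |p| ^ (-(1 + ε)) * min 2 |p * r|) := by
  simp_rw [scaled r hr]
  exact ((int_kernel hε0 hε1).comp_mul_right' hr).const_mul _

lemma integral_scaled {ε : ℝ} (r : ℝ) (hr : r ≠ 0) :
    ∫ p : ℝ, |p| ^ (-(1 + ε)) * min 2 |p * r| =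
      |r| ^ ε * ∫ u : ℝ, |u| ^ (-(1 + ε)) * min 2 |u| := by
  simp_rw [scaled r hr]
  rw [integral_const_mul,
    Measure.integral_comp_mul_right (fun u : ℝ => |u| ^ (-(1 + ε)) * min 2 |u|), smul_eq_mul,
    ← mul_assoc, abs_inv, Real.rpow_add (by positivity), Real.rpow_one]
  have : |r| ≠ 0 := by positivity
  field_simp

lemma int_weight {ε : ℝ} (hε0 : 0 < ε) (hε1 : ε < 1) (ψ : SchwartzMap ℝ ℂ) :
    Integrable (fun r : ℝ => |r| ^ (ε - 1) * ‖ψ r‖) := by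
  obtain ⟨M, hM⟩ : ∃ M, ∀ r, ‖ψ r‖ ≤ M := by
    obtain ⟨M, hM⟩ := ψ.decay 0 0
    exact ⟨M, fun r => by simpa using hM.2 r⟩
  have h1 : Integrable ((Set.Icc (-1:ℝ) 1).indicator (fun u : ℝ => |u| ^ (ε - 1))) := by
    rw [integrable_indicator_iff measurableSet_Icc]
    exact (locInt_rpow (by linarith)).integrableOn_isCompact isCompact_Icc
  have hm : Measurable (fun r : ℝ => ‖ψ r‖) := ψ.continuous.norm.measurable
  refine ((h1.mul_const M).add ψ.integrable.norm).mono' (by fun_prop)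
    (Eventually.of_forall fun u => ?_)
  rw [Real.norm_of_nonneg (by positivity), Pi.add_apply]
  by_cases hu : u ∈ Set.Icc (-1:ℝ) 1
  · rw [Set.indicator_of_mem hu]
    refine le_add_of_le_of_nonneg ?_ (by positivity)
    gcongr
    exact hM u
  · rw [Set.indicator_of_notMem hu, zero_mul, zero_add]
    have h1 : 1 < |u| := by
      by_contra! h
      exact hu (abs_le.mp h)
    refine mul_le_of_le_one_left (norm_nonneg _) ?_
    exact Real.rpow_le_one_of_one_le_of_nonpos h1.le (by linarith)

/-- the (unnormalised) inverse transform of a Schwartz function is integrable -/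
lemma int_transform (ψ : SchwartzMap ℝ ℂ) :
    Integrable (fun p : ℝ => ∫ r : ℝ, Complex.exp (Complex.I * p * r) * ψ r) := by
  have h := (FourierTransformInv.fourierInv ψ).integrable (μ := volume)
  have h2 := h.comp_mul_right' (R := (2 * π)⁻¹) (by positivity)
  convert h2 using 2 with p
  rw [SchwartzMap.fourierInv_coe, Real.fourierInv_eq']
  congr 1 with r
  rw [smul_eq_mul]
  congr 2
  have : (π : ℂ) ≠ 0 := by exact_mod_cast Real.pi_ne_zero
  simp
  field_simp

/-- The primitive. -/
lemma hasDeriv_H (ψ : SchwartzMap ℝ ℂ) (p : ℝ) :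
    HasDerivAt (fun p : ℝ => ∫ r : ℝ, (Complex.exp (Complex.I * ↑(p * r)) - 1) / r * ψ r)
      (Complex.I * ∫ r : ℝ, Complex.exp (Complex.I * p * r) * ψ r) p := by
  have hψ : Measurable ψ := ψ.continuous.measurable
  have key := hasDerivAt_integral_of_dominated_loc_of_deriv_le (𝕜 := ℝ) (μ := volume)
    (bound := fun r : ℝ => ‖ψ r‖) (x₀ := p) (s := Set.univ)
    (F := fun (p : ℝ) (r : ℝ) => (Complex.exp (Complex.I * ↑(p * r)) - 1) / r * ψ r)
    (F' := fun (p : ℝ) (r : ℝ) => Complex.I * (Complex.exp (Complex.I * p * r) * ψ r))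
    univ_mem
    (Eventually.of_forall fun x => by
      apply Measurable.aestronglyMeasurable; fun_prop) ?_
    (by apply Measurable.aestronglyMeasurable; fun_prop)
    (Eventually.of_forall fun r x _ => ?_) ψ.integrable.norm ?_
  · rw [integral_const_mul] at key
    exact key.2
  · refine (ψ.integrable.norm.const_mul |p|).mono'
      (by apply Measurable.aestronglyMeasurable; fun_prop) (Eventually.of_forall fun r => ?_)
    rw [norm_mul, norm_div]
    gcongr
    refine div_le_of_le_mul₀ (norm_nonneg _) (abs_nonneg _) ?_
    refine ((kernel_bound _).trans (min_le_right _ _)).trans ?_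
    rw [abs_mul]; simp
  · have : Complex.I * (x:ℂ) * r = Complex.I * ↑(x * r) := by push_cast; ring
    rw [this, norm_mul, norm_mul, Complex.norm_exp_I_mul_ofReal]; simp
  · have h0 : ∀ᵐ r : ℝ, r ≠ 0 := by
      simp [ae_iff]
    filter_upwards [h0] with r hr x _
    have hr' : (r : ℂ) ≠ 0 := by exact_mod_cast hr
    have h1 : HasDerivAt (fun x : ℝ => Complex.I * ↑(x * r)) (Complex.I * r) x := by
      have := ((hasDerivAt_id x).mul_const r).ofReal_comp.const_mul Complex.I
      simpa using this
    have h2 := ((h1.cexp.sub_const 1).div_const (r:ℂ)).mul_const (ψ r)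
    have h3 : Complex.exp (Complex.I * ↑(x * r)) * (Complex.I * ↑r) / ↑r * ψ r =
        Complex.I * (Complex.exp (Complex.I * x * r) * ψ r) := by
      push_cast
      rw [mul_assoc Complex.I (x:ℂ)]
      field_simp
    rw [h3] at h2
    exact h2

end Stmt3Aux

open Stmt3Aux in
/-- the distributional inverse Fourier transform of `f` is represented by a
locally integrable function `V`, continuous off the origin, with `|V r| ≤ C' |r|^{ε-1}`. -/
theorem stmt3 (f : ℝ → ℂ) (C ε : ℝ) (hε0 : 0 < ε) (hε1 : ε < 1)
    (hlip : ∃ L : NNReal, LipschitzWith L f)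
    (hdiff : Differentiable ℝ f)
    (htop : Tendsto f atTop (𝓝 0)) (hbot : Tendsto f atBot (𝓝 0))
    (hder : ∀ p : ℝ, ‖deriv f p‖ ≤ C * (1 + |p|) ^ (-(1 + ε))) :
    ∃ (V : ℝ → ℂ) (C' : ℝ),
      LocallyIntegrable V ∧
      ContinuousOn V {0}ᶜ ∧
      (∀ r : ℝ, r ≠ 0 → ‖V r‖ ≤ C' * |r| ^ (ε - 1)) ∧
      (∀ ψ : SchwartzMap ℝ ℂ,
        ∫ p : ℝ, f p * ((2 * π : ℝ)⁻¹ • ∫ r : ℝ, Complex.exp (Complex.I * p * r) * ψ r) =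
          ∫ r : ℝ, V r * ψ r) := by
  have hC : 0 ≤ C := by simpa using (norm_nonneg _).trans (hder 0)
  have hdm : Measurable (deriv f) := measurable_deriv f
  have hdint : Integrable (deriv f) := by
    refine ((integrable_one_add_norm (E := ℝ) (μ := volume) (r := 1 + ε)
      (by simpa using hε0)).const_mul C).mono' hdm.aestronglyMeasurable
      (Eventually.of_forall hder)
  -- pointwise bound
  have hpt : ∀ r p : ℝ, ‖deriv f p * (Complex.exp (Complex.I * ↑(p * r)) - 1)‖ ≤
      C * (|p| ^ (-(1 + ε)) * min 2 |p * r|) := by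
    intro r p
    rcases eq_or_ne p 0 with rfl | hp
    · simp
    rw [norm_mul, ← mul_assoc]
    gcongr
    · refine (hder p).trans ?_
      gcongr ?_ * ?_
      exact Real.rpow_le_rpow_of_nonpos (by positivity) (by linarith) (by linarith)
    · exact kernel_bound _
  set K := ∫ u : ℝ, |u| ^ (-(1 + ε)) * min 2 |u| with hK
  have hGint : ∀ r : ℝ, r ≠ 0 →
      Integrable (fun p : ℝ => deriv f p * (Complex.exp (Complex.I * ↑(p * r)) - 1)) := by
    intro r hr
    exact ((int_scaled hε0 hε1 r hr).const_mul C).mono'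
      (by apply Measurable.aestronglyMeasurable; fun_prop) (Eventually.of_forall (hpt r))
  have hGn : ∀ r : ℝ, r ≠ 0 →
      ∫ p : ℝ, ‖deriv f p * (Complex.exp (Complex.I * ↑(p * r)) - 1)‖ ≤ C * K * |r| ^ ε := by
    intro r hr
    calc _ ≤ ∫ p : ℝ, C * (|p| ^ (-(1 + ε)) * min 2 |p * r|) :=
          integral_mono (hGint r hr).norm ((int_scaled hε0 hε1 r hr).const_mul C) (hpt r)
      _ = _ := by rw [integral_const_mul, integral_scaled r hr]; ring
  set G : ℝ → ℂ := fun r => ∫ p : ℝ, deriv f p * (Complex.exp (Complex.I * ↑(p * r)) - 1)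
    with hG
  have hGc : Continuous G := by
    refine continuous_of_dominated (bound := fun p => ‖deriv f p‖ * 2) (fun r => ?_)
      (fun r => Eventually.of_forall fun p => ?_) (hdint.norm.mul_const 2)
      (Eventually.of_forall fun p => by fun_prop)
    · apply Measurable.aestronglyMeasurable; fun_prop
    · rw [norm_mul]
      gcongr
      exact (kernel_bound _).trans (min_le_left _ _)
  set c : ℂ := Complex.I / (2 * π) with hc
  have hVc : ContinuousOn (fun r : ℝ => c * (G r / r)) {0}ᶜ := by
    refine continuousOn_const.mul (hGc.continuousOn.div (by fun_prop) ?_)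
    intro r hr
    exact_mod_cast hr
  have hVb : ∀ r : ℝ, r ≠ 0 → ‖c * (G r / r)‖ ≤ (‖c‖ * (C * K)) * |r| ^ (ε - 1) := by
    intro r hr
    have hr' : 0 < |r| := by positivity
    rw [norm_mul, norm_div (G r), Complex.norm_real, Real.norm_eq_abs, mul_assoc,
      Real.rpow_sub_one hr'.ne', ← mul_div_assoc (C * K)]
    refine mul_le_mul_of_nonneg_left ?_ (norm_nonneg c)
    refine div_le_div_of_nonneg_right ?_ hr'.le
    exact (norm_integral_le_integral_norm _).trans (hGn r hr)
  refine ⟨fun r => c * (G r / r), ‖c‖ * (C * K), ?_, hVc, hVb, ?_⟩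
  · refine locallyIntegrable_of_norm_le_rpow (E := ℝ) (C := ‖c‖ * (C * K)) (α := 1 - ε)
      (by simp) (by simpa using hε0) ?_ ?_
    · have hne : ∀ᵐ r : ℝ, r ≠ 0 := by simp [ae_iff]
      filter_upwards [hne] with r hr
      rw [neg_sub, Real.norm_eq_abs]
      exact hVb r hr
    · have := hGc.measurable
      apply Measurable.aestronglyMeasurable; fun_prop
  intro ψ
  have hψ : Measurable ψ := ψ.continuous.measurable
  have hne : ∀ᵐ r : ℝ, r ≠ 0 := by simp [ae_iff]
  -- Fubini
  set F : ℝ → ℝ → ℂ := fun p r =>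
    deriv f p * ((Complex.exp (Complex.I * ↑(p * r)) - 1) / r * ψ r) with hF
  have hFeq : ∀ p r, F p r =
      deriv f p * (Complex.exp (Complex.I * ↑(p * r)) - 1) * (ψ r / r) := by
    intro p r; simp only [hF]; ring
  have hFm : Measurable (Function.uncurry F) := by
    simp only [hF, Function.uncurry_def]; fun_prop
  have hFint : Integrable (Function.uncurry F) (volume.prod volume) := by
    rw [integrable_prod_iff' hFm.aestronglyMeasurable]
    constructor
    · filter_upwards [hne] with r hr
      simp only [Function.uncurry_apply_pair, hFeq]
      exact (hGint r hr).mul_const _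
    · refine ((int_weight hε0 hε1 ψ).const_mul (C * K)).mono'
        hFm.aestronglyMeasurable.norm.prod_swap.integral_prod_right' ?_
      filter_upwards [hne] with r hr
      have hr' : 0 < |r| := by positivity
      rw [Real.norm_of_nonneg (by positivity)]
      simp only [Function.uncurry_apply_pair, hFeq]
      simp_rw [norm_mul _ (ψ r / r)]
      rw [integral_mul_const]
      calc _ ≤ C * K * |r| ^ ε * ‖ψ r / r‖ := by gcongr; exact hGn r hr
        _ = _ := by
          rw [norm_div, Complex.norm_real, Real.norm_eq_abs, Real.rpow_sub_one hr'.ne']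
          field_simp
  have hswap := integral_integral_swap hFint
  have hHint := hFint.integral_prod_left
  simp only [Function.uncurry_apply_pair, hF, integral_const_mul] at hHint
  set H : ℝ → ℂ := fun p => ∫ r : ℝ, (Complex.exp (Complex.I * ↑(p * r)) - 1) / r * ψ r with hH
  set T : ℝ → ℂ := fun p => ∫ r : ℝ, Complex.exp (Complex.I * p * r) * ψ r with hT
  have hTint : Integrable T := int_transform ψ
  have hHd : ∀ p, HasDerivAt H (Complex.I * T p) p := hasDeriv_H ψ
  have hITint : Integrable (fun p => Complex.I * T p) := hTint.const_mul _
  have hHtop := tendsto_limUnder_of_hasDerivAt_of_integrableOn_Ioi (a := 0)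
    (fun x _ => hHd x) hITint.integrableOn
  have hHbot := tendsto_limUnder_of_hasDerivAt_of_integrableOn_Iic (a := 0)
    (fun x _ => hHd x) hITint.integrableOn
  have hfb : ∃ M, ∀ p, ‖f p‖ ≤ M := by
    have e1 : ∀ᶠ p in atTop, ‖f p‖ < 1 := by
      have := htop.norm
      rw [norm_zero] at this
      exact this.eventually_lt_const one_pos
    have e2 : ∀ᶠ p in atBot, ‖f p‖ < 1 := by
      have := hbot.norm
      rw [norm_zero] at this
      exact this.eventually_lt_const one_pos
    obtain ⟨b, hb⟩ := eventually_atTop.mp e1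
    obtain ⟨a, ha⟩ := eventually_atBot.mp e2
    obtain ⟨M, hM⟩ := (isCompact_Icc (a := a) (b := b)).exists_bound_of_continuousOn
      hdiff.continuous.continuousOn
    refine ⟨max M 1, fun p => ?_⟩
    rcases le_total p a with h | h
    · exact (ha p h).le.trans (le_max_right _ _)
    rcases le_total b p with h' | h'
    · exact (hb p h').le.trans (le_max_right _ _)
    · exact (hM p ⟨h, h'⟩).trans (le_max_left _ _)
  obtain ⟨M, hM⟩ := hfb
  have hbM : Tendsto (f * H) atBot (𝓝 0) := by
    have := hbot.mul hHbot
    rw [zero_mul] at this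
    exact this
  have htM : Tendsto (f * H) atTop (𝓝 0) := by
    have := htop.mul hHtop
    rw [zero_mul] at this
    exact this
  have hparts := integral_mul_deriv_eq_deriv_mul (u := f) (v := H) (u' := deriv f)
    (v' := fun p => Complex.I * T p) (a' := 0) (b' := 0)
    (fun x _ => (hdiff x).hasDerivAt) (fun x _ => hHd x)
    (hITint.bdd_mul (c := M) hdiff.continuous.aestronglyMeasurable (Eventually.of_forall hM))
    hHint hbM htM
  have hR : ∫ r : ℝ, c * (G r / r) * ψ r = c * ∫ p, deriv f p * H p := by
    calc _ = ∫ r : ℝ, c * ∫ p, F p r := by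
          congr 1 with r
          simp only [hFeq, integral_mul_const]
          change _ = c * (G r * _)
          ring
      _ = _ := by
          rw [integral_const_mul, ← hswap]
          simp only [hF, integral_const_mul, hH]
  have hL : ∫ p : ℝ, f p * ((2 * π : ℝ)⁻¹ • T p) = (2 * π : ℂ)⁻¹ * ∫ p, f p * T p := by
    rw [← integral_const_mul]
    congr 1 with p
    rw [Complex.real_smul]; push_cast; ring
  have hp2 : ∫ p, f p * (Complex.I * T p) = Complex.I * ∫ p, f p * T p := by
    rw [← integral_const_mul]
    congr 1 with p
    ring
  rw [hp2] at hparts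
  rw [hL, hR, hc]
  have h5 : ∫ p, deriv f p * H p = -(Complex.I * ∫ p, f p * T p) := by
    rw [hparts]; ring
  rw [h5]
  linear_combination ((∫ p, f p * T p) / (2 * π)) * Complex.I_mul_I
end

section
/- Let K ≥ 1 and let f ∈ C^K(ℝ, ℂ) satisfy f(±∞) = 0 and |f^{(k)}(p)| ≤ C_k (1+|p|)^{-(k+ε)} for all 1 ≤ k ≤ K and some 0 < ε < 1. Then the inverse Fourier transform of f is represented by a function V which is of class C^{K-1} on ℝ \ {0} and satisfies |V^{(k-1)}(r)| ≤ C'_k |r|^{ε-k} for all r ≠ 0 and 1 ≤ k ≤ K. -/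
open Filter Real Topology MeasureTheory

namespace Stmt6Aux

/-- `|x|^s` is integrable near the origin for `s > -1`. -/
lemma integrable_ind (s : ℝ) (hs : -1 < s) :
    Integrable (Set.indicator (Set.Icc (-1 : ℝ) 1) (fun x : ℝ => |x| ^ s)) := by
  rw [integrable_indicator_iff measurableSet_Icc]
  have h1 : IntegrableOn (fun x : ℝ => |x| ^ s) (Set.Ioc 0 1) := by
    have := (intervalIntegral.intervalIntegrable_rpow' (a := 0) (b := 1) hs)
    rw [intervalIntegrable_iff_integrableOn_Ioc_of_le zero_le_one] at this
    refine this.congr_fun (fun x hx => ?_) measurableSet_Ioc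
    simp only [abs_of_pos hx.1]
  have h2 : IntegrableOn (fun x : ℝ => |x| ^ s) (Set.Ico (-1) 0) := by
    have := h1.comp_neg
    simpa using this
  have h3 : IntegrableOn (fun x : ℝ => |x| ^ s) {0} := by
    simp
  refine ((h1.union h2).union h3).mono_set ?_
  intro x hx
  rcases lt_trichotomy x 0 with h | h | h
  · exact Or.inl (Or.inr ⟨hx.1, h⟩)
  · exact Or.inr h
  · exact Or.inl (Or.inl ⟨h, hx.2⟩)

lemma norm_e (p r : ℝ) : ‖Complex.exp (Complex.I * p * r)‖ = 1 := by
  have : Complex.I * p * r = ((p * r : ℝ) : ℂ) * Complex.I := by push_cast; ring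
  rw [this, Complex.norm_exp_ofReal_mul_I]

lemma norm_e_sub (p r : ℝ) : ‖Complex.exp (Complex.I * p * r) - 1‖ ≤ |p * r| := by
  have : Complex.I * p * r = Complex.I * ((p * r : ℝ) : ℂ) := by push_cast; ring
  rw [this]
  exact Real.norm_exp_I_mul_ofReal_sub_one_le

lemma norm_e_sub' (p r : ℝ) : ‖Complex.exp (Complex.I * p * r) - 1‖ ≤ 2 := by
  refine (norm_sub_le _ _).trans ?_
  rw [norm_e]; norm_num

lemma integrable_japanese (ε : ℝ) (hε : 0 < ε) :
    Integrable (fun p : ℝ => (1 + |p|) ^ (-(1 + ε))) := by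
  have := integrable_one_add_norm (E := ℝ) (μ := volume) (r := 1 + ε) (by simp [hε])
  simpa using this

/-- model function for the key estimate -/
noncomputable def phi (ε : ℝ) (q : ℝ) : ℝ :=
  |q| ^ (-(1 + ε)) * ‖Complex.exp (Complex.I * q * (1 : ℝ)) - 1‖

lemma integrable_phi (ε : ℝ) (hε0 : 0 < ε) (hε1 : ε < 1) : Integrable (phi ε) := by
  have hb := (integrable_ind (-ε) (by linarith)).add
    ((integrable_japanese ε hε0).const_mul (2 * 2 ^ (1 + ε)))
  refine hb.mono' ?_ (Eventually.of_forall fun q => ?_)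
  · apply Measurable.aestronglyMeasurable
    unfold phi
    fun_prop
  · have hφ : 0 ≤ phi ε q := by unfold phi; positivity
    rw [Real.norm_of_nonneg hφ, Pi.add_apply]
    by_cases hq : q ∈ Set.Icc (-1 : ℝ) 1
    · rw [Set.indicator_of_mem hq]
      refine le_add_of_le_of_nonneg ?_ (by positivity)
      unfold phi
      rcases eq_or_ne q 0 with rfl | h0
      · simp; positivity
      · have hpos : 0 < |q| := abs_pos.2 h0
        calc |q| ^ (-(1 + ε)) * ‖Complex.exp (Complex.I * q * (1 : ℝ)) - 1‖
            ≤ |q| ^ (-(1 + ε)) * |q| := by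
              gcongr
              simpa using norm_e_sub q 1
          _ = |q| ^ (-ε) := by
              rw [← Real.rpow_add_one hpos.ne']; congr 1; ring
    · rw [Set.indicator_of_notMem hq, zero_add]
      have h1 : 1 ≤ |q| := by
        by_contra h
        push Not at h
        exact hq (abs_le.1 h.le)
      unfold phi
      calc |q| ^ (-(1 + ε)) * ‖Complex.exp (Complex.I * q * (1 : ℝ)) - 1‖
          ≤ (((1 + |q|) / 2) ^ (-(1 + ε))) * 2 := by
            gcongr ?_ * ?_
            · apply Real.rpow_le_rpow_of_nonpos (by positivity) (by linarith) (by linarith)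
            · exact norm_e_sub' q 1
        _ = 2 * 2 ^ (1 + ε) * (1 + |q|) ^ (-(1 + ε)) := by
            rw [Real.div_rpow (by positivity) (by positivity), Real.rpow_neg (x := 2) (by norm_num)]
            field_simp

/-- key estimate -/
lemma key_est (ε : ℝ) (hε0 : 0 < ε) (hε1 : ε < 1) (h : ℝ → ℂ) (C : ℝ)
    (hb : ∀ p : ℝ, ‖h p‖ ≤ C * (1 + |p|) ^ (-(1 + ε))) (r : ℝ) (hr : r ≠ 0) :
    ∫ p : ℝ, ‖h p‖ * ‖Complex.exp (Complex.I * p * r) - 1‖ ≤ C * (∫ q, phi ε q) * |r| ^ ε := by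
  have hC : 0 ≤ C := by
    have := (norm_nonneg _).trans (hb 0)
    simpa using this
  have hrp : 0 < |r| := abs_pos.2 hr
  have hint : Integrable (fun p : ℝ => C * |r| ^ (1 + ε) * phi ε (p * r)) :=
    ((integrable_phi ε hε0 hε1).comp_mul_right' hr).const_mul _
  calc ∫ p : ℝ, ‖h p‖ * ‖Complex.exp (Complex.I * p * r) - 1‖
      ≤ ∫ p : ℝ, C * |r| ^ (1 + ε) * phi ε (p * r) := by
        apply integral_mono_of_nonneg (Eventually.of_forall fun p => by positivity) hint
        refine Eventually.of_forall fun p => ?_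
        simp only
        rcases eq_or_ne p 0 with rfl | h0
        · simp [phi]
        · have hpp : 0 < |p| := abs_pos.2 h0
          have e1 : phi ε (p * r) = |p| ^ (-(1 + ε)) * |r| ^ (-(1 + ε)) *
              ‖Complex.exp (Complex.I * p * r) - 1‖ := by
            unfold phi
            rw [abs_mul, Real.mul_rpow (abs_nonneg _) (abs_nonneg _)]
            push_cast
            rw [mul_one, mul_assoc Complex.I]
          have e2 : |r| ^ (1 + ε) * |r| ^ (-(1 + ε)) = 1 := by
            rw [← Real.rpow_add hrp]; simp
          have e3 : C * |r| ^ (1 + ε) * phi ε (p * r) = C * |p| ^ (-(1 + ε)) *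
              ‖Complex.exp (Complex.I * p * r) - 1‖ := by
            rw [e1]
            linear_combination C * |p| ^ (-(1 + ε)) * ‖Complex.exp (Complex.I * p * r) - 1‖ * e2
          rw [e3]
          gcongr
          refine (hb p).trans ?_
          gcongr C * ?_
          apply Real.rpow_le_rpow_of_nonpos (by positivity) (by linarith) (by linarith)
    _ = C * (∫ q, phi ε q) * |r| ^ ε := by
        rw [integral_const_mul, Measure.integral_comp_mul_right, smul_eq_mul, abs_inv,
          add_comm, Real.rpow_add_one hrp.ne']
        field_simp

lemma tendsto_decay (ε : ℝ) (hε : 0 < ε) (u : ℝ → ℂ) (C : ℝ)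
    (hb : ∀ p : ℝ, ‖u p‖ ≤ C * (1 + |p|) ^ (-ε)) (l : Filter ℝ)
    (hl : Tendsto (fun x : ℝ => |x|) l atTop) : Tendsto u l (𝓝 0) := by
  apply squeeze_zero_norm hb
  have h1 : Tendsto (fun p : ℝ => 1 + |p|) l atTop := tendsto_atTop_add_const_left _ _ hl
  have := ((tendsto_rpow_neg_atTop hε).comp h1).const_mul C
  simpa using this

structure Good (ε : ℝ) (n : ℕ) (h : ℝ → ℂ) : Prop where
  cd : ContDiff ℝ n h
  bd : ∀ j ≤ n, ∃ C : ℝ, ∀ p : ℝ, ‖iteratedDeriv j h p‖ ≤ C * (1 + |p|) ^ (-(1 + j + ε))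
  int0 : ∫ p, h p = 0

noncomputable def T (c : ℂ) (h : ℝ → ℂ) : ℝ → ℂ := fun p => p * deriv h p + (c + 1) * h p

lemma iteratedDeriv_T (c : ℂ) (n : ℕ) (h : ℝ → ℂ) (hh : ContDiff ℝ (n + 1 : ℕ) h) (j : ℕ)
    (hj : j ≤ n) : iteratedDeriv j (T c h) =
      fun p : ℝ => p * iteratedDeriv (j + 1) h p + (j + (c + 1)) * iteratedDeriv j h p := by
  induction j with
  | zero => funext p; simp [T]
  | succ j ih =>
    rw [iteratedDeriv_succ, ih (by omega)]
    funext p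
    have d1 : HasDerivAt (iteratedDeriv (j + 1) h) (iteratedDeriv (j + 2) h p) p := by
      rw [iteratedDeriv_succ (n := j + 1)]
      exact (hh.differentiable_iteratedDeriv (j + 1) (by exact_mod_cast (by omega)) p).hasDerivAt
    have d0 : HasDerivAt (iteratedDeriv j h) (iteratedDeriv (j + 1) h p) p := by
      rw [iteratedDeriv_succ (n := j)]
      exact (hh.differentiable_iteratedDeriv j (by exact_mod_cast (by omega)) p).hasDerivAt
    have di : HasDerivAt (fun p : ℝ => (p : ℂ)) 1 p := Complex.ofRealCLM.hasDerivAt (x := p)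
    have := ((di.mul d1).add (d0.const_mul ((j : ℂ) + (c + 1)))).deriv
    refine Eq.trans this ?_
    push_cast
    ring

lemma Good.bd0 {ε : ℝ} {n : ℕ} {h : ℝ → ℂ} (H : Good ε n h) :
    ∃ C : ℝ, ∀ p : ℝ, ‖h p‖ ≤ C * (1 + |p|) ^ (-(1 + ε)) := by
  obtain ⟨C, hC⟩ := H.bd 0 (Nat.zero_le _)
  exact ⟨C, fun p => by simpa using hC p⟩

lemma Good.bd1 {ε : ℝ} {n : ℕ} {h : ℝ → ℂ} (H : Good ε (n + 1) h) :
    ∃ C : ℝ, ∀ p : ℝ, ‖p * deriv h p‖ ≤ C * (1 + |p|) ^ (-(1 + ε)) := by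
  obtain ⟨C, hC⟩ := H.bd 1 (by omega)
  have hC0 : 0 ≤ C := by
    have := (norm_nonneg _).trans (hC 0)
    simpa using this
  refine ⟨C, fun p => ?_⟩
  have := hC p
  rw [iteratedDeriv_one] at this
  rw [norm_mul, Complex.norm_real, Real.norm_eq_abs]
  calc |p| * ‖deriv h p‖ ≤ (1 + |p|) * (C * (1 + |p|) ^ (-(1 + (1 : ℕ) + ε))) := by
        gcongr; linarith
    _ = C * ((1 + |p|) ^ (-(1 + (1 : ℕ) + ε)) * (1 + |p|)) := by ring
    _ = _ := by
        rw [← Real.rpow_add_one (by positivity)]; congr 2; push_cast; ring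

lemma Good.cont {ε : ℝ} {n : ℕ} {h : ℝ → ℂ} (H : Good ε n h) : Continuous h := H.cd.continuous

lemma Good.integrable {ε : ℝ} (hε : 0 < ε) {n : ℕ} {h : ℝ → ℂ} (H : Good ε n h) :
    Integrable h := by
  obtain ⟨C, hC⟩ := H.bd0
  exact ((integrable_japanese ε hε).const_mul C).mono' H.cont.aestronglyMeasurable
    (Eventually.of_forall hC)

lemma Good.cont1 {ε : ℝ} {n : ℕ} {h : ℝ → ℂ} (H : Good ε (n + 1) h) :
    Continuous (deriv h) := H.cd.continuous_deriv (by exact_mod_cast (by omega))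

lemma Good.hasDerivAt {ε : ℝ} {n : ℕ} {h : ℝ → ℂ} (H : Good ε (n + 1) h) (p : ℝ) :
    HasDerivAt h (deriv h p) p :=
  (H.cd.differentiable (by exact_mod_cast Nat.succ_ne_zero n) p).hasDerivAt

lemma Good.integrable1 {ε : ℝ} (hε : 0 < ε) {n : ℕ} {h : ℝ → ℂ} (H : Good ε (n + 1) h) :
    Integrable (fun p : ℝ => p * deriv h p) := by
  obtain ⟨C, hC⟩ := H.bd1
  have := H.cont1
  exact ((integrable_japanese ε hε).const_mul C).mono' (by fun_prop)
    (Eventually.of_forall hC)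

lemma Good.integrable2 {ε : ℝ} (hε : 0 < ε) {n : ℕ} {h : ℝ → ℂ} (H : Good ε (n + 1) h) :
    Integrable (deriv h) := by
  obtain ⟨C, hC⟩ := H.bd 1 (by omega)
  have hC0 : 0 ≤ C := by
    have := (norm_nonneg _).trans (hC 0)
    simpa using this
  refine ((integrable_japanese ε hε).const_mul C).mono' H.cont1.aestronglyMeasurable
    (Eventually.of_forall fun p => ?_)
  have := hC p
  rw [iteratedDeriv_one] at this
  refine this.trans ?_
  gcongr C * ?_
  apply Real.rpow_le_rpow_of_exponent_le
  · linarith [abs_nonneg p]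
  · push_cast; linarith

lemma Good.T {ε : ℝ} (hε : 0 < ε) (c : ℂ) {n : ℕ} {h : ℝ → ℂ} (H : Good ε (n + 1) h) :
    Good ε n (T c h) where
  cd := by
    have h1 : ContDiff ℝ n (deriv h) := by
      have := H.cd
      push_cast at this
      exact (contDiff_succ_iff_deriv.1 this).2.2
    have h0 : ContDiff ℝ n h := H.cd.of_le (by exact_mod_cast (by omega))
    have hi : ContDiff ℝ n (fun p : ℝ => (p : ℂ)) := Complex.ofRealCLM.contDiff
    exact (hi.mul h1).add (contDiff_const.mul h0)
  bd := by
    intro j hj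
    obtain ⟨C0, h0⟩ := H.bd j (by omega)
    obtain ⟨C1, h1⟩ := H.bd (j + 1) (by omega)
    refine ⟨C1 + ‖(j : ℂ) + (c + 1)‖ * C0, fun p => ?_⟩
    rw [iteratedDeriv_T c n h H.cd j hj]
    refine (norm_add_le _ _).trans ?_
    rw [norm_mul, norm_mul, Complex.norm_real, Real.norm_eq_abs, add_mul]
    apply add_le_add
    · calc |p| * ‖iteratedDeriv (j + 1) h p‖
          ≤ (1 + |p|) * (C1 * (1 + |p|) ^ (-(1 + (j + 1 : ℕ) + ε))) := by
            gcongr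
            · linarith
            · exact h1 p
        _ = C1 * ((1 + |p|) ^ (-(1 + (j + 1 : ℕ) + ε)) * (1 + |p|)) := by ring
        _ = _ := by
          rw [← Real.rpow_add_one (by positivity)]; congr 2; push_cast; ring
    · rw [mul_assoc]
      gcongr
      exact h0 p
  int0 := by
    have hd : ∀ p : ℝ, HasDerivAt (fun p : ℝ => p * h p) (p * deriv h p + h p) p := by
      intro p
      have di : HasDerivAt (fun p : ℝ => (p : ℂ)) 1 p := Complex.ofRealCLM.hasDerivAt (x := p)
      refine (di.mul (H.hasDerivAt p)).congr_deriv ?_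
      ring
    obtain ⟨C, hC⟩ := H.bd0
    have hb : ∀ p : ℝ, ‖p * h p‖ ≤ C * (1 + |p|) ^ (-ε) := by
      intro p
      rw [norm_mul, Complex.norm_real, Real.norm_eq_abs]
      calc |p| * ‖h p‖ ≤ (1 + |p|) * (C * (1 + |p|) ^ (-(1 + ε))) := by
            gcongr
            · linarith
            · exact hC p
        _ = C * ((1 + |p|) ^ (-(1 + ε)) * (1 + |p|)) := by ring
        _ = _ := by
          rw [← Real.rpow_add_one (by positivity)]; congr 2; ring
    have := integral_of_hasDerivAt_of_tendsto hd ((H.integrable1 hε).add (H.integrable hε))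
      (tendsto_decay ε hε _ C hb _ tendsto_abs_atBot_atTop)
      (tendsto_decay ε hε _ C hb _ tendsto_abs_atTop_atTop)
    have e : Stmt6Aux.T c h = fun p : ℝ => (p * deriv h p + h p) + c * h p := by
      funext p; simp only [Stmt6Aux.T]; ring
    have e2 : ∫ p : ℝ, ((p * deriv h p + h p) + c * h p) =
        (∫ p : ℝ, (p * deriv h p + h p)) + ∫ p : ℝ, c * h p :=
      integral_add ((H.integrable1 hε).add (H.integrable hε)) ((H.integrable hε).const_mul c)
    rw [e, e2, this, integral_const_mul, H.int0]
    simp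

noncomputable def G (h : ℝ → ℂ) (r : ℝ) : ℂ := ∫ p : ℝ, h p * Complex.exp (Complex.I * p * r)

lemma integrable_e {h : ℝ → ℂ} (hi : Integrable h) (r : ℝ) :
    Integrable (fun p : ℝ => h p * Complex.exp (Complex.I * p * r)) :=
  hi.mul_bdd (c := 1) (by fun_prop) (Eventually.of_forall fun p => (norm_e p r).le)

lemma G_eq_sub {h : ℝ → ℂ} (hi : Integrable h) (h0 : ∫ p, h p = 0) (r : ℝ) :
    G h r = ∫ p : ℝ, h p * (Complex.exp (Complex.I * p * r) - 1) := by
  simp only [mul_sub, mul_one]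
  rw [integral_sub (integrable_e hi r) hi, h0, sub_zero, G]

lemma continuous_G {h : ℝ → ℂ} (hi : Integrable h) : Continuous (G h) := by
  unfold G
  refine continuous_of_dominated (bound := fun p => ‖h p‖)
    (fun r => (integrable_e hi r).aestronglyMeasurable) (fun r => Eventually.of_forall fun p => ?_)
    hi.norm (Eventually.of_forall fun p => by fun_prop)
  rw [norm_mul, norm_e, mul_one]

lemma Good.G_bound {ε : ℝ} (hε0 : 0 < ε) (hε1 : ε < 1) {n : ℕ} {h : ℝ → ℂ} (H : Good ε n h) :
    ∃ C : ℝ, ∀ r : ℝ, r ≠ 0 → ‖G h r‖ ≤ C * |r| ^ ε := by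
  obtain ⟨C, hC⟩ := H.bd0
  refine ⟨C * (∫ q, phi ε q), fun r hr => ?_⟩
  rw [G_eq_sub (H.integrable hε0) H.int0]
  refine (norm_integral_le_integral_norm _).trans ?_
  simp only [norm_mul]
  exact key_est ε hε0 hε1 h C hC r hr

lemma hasDerivAt_e_left (p r : ℝ) : HasDerivAt (fun p : ℝ => Complex.exp (Complex.I * p * r))
    (Complex.exp (Complex.I * p * r) * (Complex.I * r)) p := by
  have di : HasDerivAt (fun p : ℝ => (p : ℂ)) 1 p := Complex.ofRealCLM.hasDerivAt (x := p)
  simpa using ((di.const_mul Complex.I).mul_const (r : ℂ)).cexp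

lemma hasDerivAt_e_right (p r : ℝ) : HasDerivAt (fun r : ℝ => Complex.exp (Complex.I * p * r))
    (Complex.exp (Complex.I * p * r) * (Complex.I * p)) r := by
  have di : HasDerivAt (fun p : ℝ => (p : ℂ)) 1 r := Complex.ofRealCLM.hasDerivAt (x := r)
  simpa using (di.const_mul (Complex.I * (p : ℂ))).cexp

lemma Good.mul_G {ε : ℝ} (hε0 : 0 < ε) {n : ℕ} {h : ℝ → ℂ} (H : Good ε (n + 1) h)
    (r : ℝ) : r * G h r = Complex.I * G (deriv h) r := by
  have := integral_eq_zero_of_hasDerivAt_of_integrable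
    (fun p => (H.hasDerivAt p).mul (hasDerivAt_e_left p r))
    (((integrable_e (H.integrable2 hε0) r).add
      ((integrable_e (H.integrable hε0) r).mul_const (Complex.I * r))).congr
      (Eventually.of_forall fun p => by simp only [Pi.add_apply]; ring))
    (integrable_e (H.integrable hε0) r)
  have e : ∀ p : ℝ, deriv h p * Complex.exp (Complex.I * p * r) +
      h p * (Complex.exp (Complex.I * p * r) * (Complex.I * r)) =
      deriv h p * Complex.exp (Complex.I * p * r) +
      (h p * Complex.exp (Complex.I * p * r)) * (Complex.I * r) := fun p => by ring
  simp only [e] at this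
  rw [integral_add (integrable_e (H.integrable2 hε0) r)
    ((integrable_e (H.integrable hε0) r).mul_const _), integral_mul_const] at this
  change G (deriv h) r + G h r * _ = 0 at this
  linear_combination (-Complex.I) * this + (r * G h r) * Complex.I_sq

lemma hasDerivAt_G {g : ℝ → ℂ} (hi : Integrable g) (hi' : Integrable (fun p : ℝ => p * g p))
    (r : ℝ) : HasDerivAt (G g) (Complex.I * G (fun p : ℝ => p * g p) r) r := by
  have := (hasDerivAt_integral_of_dominated_loc_of_deriv_le (μ := volume) (x₀ := r)
    (F := fun (r : ℝ) (p : ℝ) => g p * Complex.exp (Complex.I * p * r))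
    (F' := fun (r : ℝ) (p : ℝ) => Complex.I * ((p * g p) * Complex.exp (Complex.I * p * r)))
    (bound := fun p : ℝ => ‖p * g p‖) (s := Set.univ) univ_mem
    (Eventually.of_forall fun r => (integrable_e hi r).aestronglyMeasurable)
    (integrable_e hi r)
    ((integrable_e hi' r).const_mul _).aestronglyMeasurable
    (Eventually.of_forall fun p r _ => by
      rw [norm_mul, norm_mul (_ * _), norm_e, Complex.norm_I, mul_one, one_mul])
    hi'.norm
    (Eventually.of_forall fun p r _ => by
      refine ((hasDerivAt_e_right p r).const_mul (g p)).congr_deriv ?_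
      ring)).2
  rw [integral_const_mul] at this
  exact this

/-- derivative of `r^{-k} G h`. -/
lemma Good.hasDerivAt_U {ε : ℝ} (hε0 : 0 < ε) {n : ℕ} {h : ℝ → ℂ}
    (H : Good ε (n + 1) h) (k : ℕ) (r : ℝ) (hr : r ≠ 0) :
    HasDerivAt (fun r : ℝ => ((r : ℂ)⁻¹) ^ k * G h r)
      (-(((r : ℂ)⁻¹) ^ (k + 1) * G (Stmt6Aux.T k h) r)) r := by
  have hrc : (r : ℂ) ≠ 0 := by exact_mod_cast hr
  have di : HasDerivAt (fun p : ℝ => (p : ℂ)) 1 r := Complex.ofRealCLM.hasDerivAt (x := r)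
  have dinv : HasDerivAt (fun p : ℝ => (p : ℂ)⁻¹ ^ (k + 1))
      (((k + 1 : ℕ) : ℂ) * (r : ℂ)⁻¹ ^ k * (-1 / (r : ℂ) ^ 2)) r := by
    exact (di.inv hrc).pow (k + 1)
  have dG := (hasDerivAt_G (H.integrable2 hε0) (H.integrable1 hε0) r).const_mul Complex.I
  have hmul := dinv.mul dG
  have ev : (fun r : ℝ => ((r : ℂ)⁻¹) ^ k * G h r) =ᶠ[𝓝 r]
      ((fun p : ℝ => (p : ℂ)⁻¹ ^ (k + 1)) * fun p => Complex.I * G (deriv h) p) := by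
    filter_upwards [isOpen_ne.mem_nhds hr] with s hs
    have hsc : (s : ℂ) ≠ 0 := by exact_mod_cast hs
    simp only [Pi.mul_apply]
    rw [← H.mul_G hε0, pow_succ]
    field_simp
  refine (hmul.congr_of_eventuallyEq ev).congr_deriv ?_
  have eT : G (Stmt6Aux.T k h) r = G (fun p : ℝ => p * deriv h p) r + (k + 1) * G h r := by
    unfold G Stmt6Aux.T
    simp only [add_mul (_ * _)]
    rw [integral_add (integrable_e (H.integrable1 hε0) r)]
    · rw [← integral_const_mul]; congr 2; funext p; ring
    · have := (integrable_e (H.integrable hε0) r).const_mul ((k : ℂ) + 1)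
      refine this.congr (Eventually.of_forall fun p => ?_)
      simp only; ring
  rw [eT, ← H.mul_G hε0]
  push_cast
  have epow : ((r : ℂ)⁻¹) ^ (k + 1) = ((r : ℂ) ^ k)⁻¹ * (r : ℂ)⁻¹ := by rw [pow_succ, inv_pow]
  rw [epow, inv_pow]
  field_simp
  linear_combination (G (fun p : ℝ => p * deriv h p) r) * Complex.I_sq

lemma Good.main {ε : ℝ} (hε0 : 0 < ε) (hε1 : ε < 1) (n : ℕ) : ∀ (h : ℝ → ℂ) (_ : Good ε n h)
    (k : ℕ), ContDiffOn ℝ n (fun r : ℝ => ((r : ℂ)⁻¹) ^ k * G h r) {0}ᶜ ∧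
      ∀ j ≤ n, ∃ C : ℝ, ∀ r : ℝ, r ≠ 0 →
        ‖iteratedDerivWithin j (fun r : ℝ => ((r : ℂ)⁻¹) ^ k * G h r) {0}ᶜ r‖
          ≤ C * |r| ^ (ε - k - j) := by
  have base : ∀ (n : ℕ) (h : ℝ → ℂ) (_ : Good ε n h) (k : ℕ), ∃ C : ℝ, ∀ r : ℝ, r ≠ 0 →
        ‖iteratedDerivWithin 0 (fun r : ℝ => ((r : ℂ)⁻¹) ^ k * G h r) {0}ᶜ r‖
          ≤ C * |r| ^ (ε - k - (0 : ℕ)) := by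
    intro n h H k
    obtain ⟨C, hC⟩ := H.G_bound hε0 hε1
    refine ⟨C, fun r hr => ?_⟩
    have hrp : 0 < |r| := abs_pos.2 hr
    rw [iteratedDerivWithin_zero, norm_mul, norm_pow, norm_inv, Complex.norm_real,
      Real.norm_eq_abs]
    calc |r|⁻¹ ^ k * ‖G h r‖ ≤ |r|⁻¹ ^ k * (C * |r| ^ ε) := by gcongr; exact hC r hr
      _ = _ := by
        push_cast
        rw [sub_zero, Real.rpow_sub hrp, Real.rpow_natCast, inv_pow]
        field_simp
  induction n with
  | zero =>
    intro h H k
    refine ⟨?_, fun j hj => ?_⟩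
    · have : ContinuousOn (fun r : ℝ => ((r : ℂ)⁻¹) ^ k * G h r) {0}ᶜ := by
        refine ContinuousOn.mul (ContinuousOn.pow (ContinuousOn.inv₀ (by fun_prop) ?_) _)
          (continuous_G (H.integrable hε0)).continuousOn
        intro x hx
        exact_mod_cast hx
      simpa using this
    · obtain rfl : j = 0 := by omega
      exact base 0 h H k
  | succ n ih =>
    intro h H k
    obtain ⟨i1, i2⟩ := ih _ (H.T hε0 k) (k + 1)
    have hopen : IsOpen ({0}ᶜ : Set ℝ) := isOpen_compl_singleton
    have hdw : Set.EqOn (derivWithin (fun r : ℝ => ((r : ℂ)⁻¹) ^ k * G h r) {0}ᶜ)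
        (-(fun r : ℝ => (((r : ℂ)⁻¹) ^ (k + 1) * G (Stmt6Aux.T k h) r))) {0}ᶜ := by
      intro r hr
      exact (H.hasDerivAt_U hε0 k r hr).hasDerivWithinAt.derivWithin (hopen.uniqueDiffWithinAt hr)
    refine ⟨?_, fun j hj => ?_⟩
    · push_cast
      rw [contDiffOn_succ_iff_derivWithin hopen.uniqueDiffOn]
      refine ⟨fun r hr => (H.hasDerivAt_U hε0 k r hr).differentiableAt.differentiableWithinAt,
        by simp, ?_⟩
      exact i1.neg.congr hdw
    · cases j with
      | zero => exact base _ h H k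
      | succ j =>
        obtain ⟨C, hC⟩ := i2 j (by omega)
        refine ⟨C, fun r hr => ?_⟩
        rw [iteratedDerivWithin_succ', iteratedDerivWithin_congr hdw hr,
          iteratedDerivWithin_neg, norm_neg]
        refine (hC r hr).trans_eq ?_
        congr 2
        push_cast
        ring

/-- `(e^{ipr} - 1)/r * ψ(r)` integrated over `r`. -/
noncomputable def Phi (ψ : ℝ → ℂ) (p : ℝ) : ℂ :=
  ∫ r : ℝ, (Complex.exp (Complex.I * p * r) - 1) * (r : ℂ)⁻¹ * ψ r

noncomputable def Psi (ψ : ℝ → ℂ) (p : ℝ) : ℂ :=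
  ∫ r : ℝ, Complex.exp (Complex.I * p * r) * ψ r

lemma integrable_e2 {h : ℝ → ℂ} (hi : Integrable h) (p : ℝ) :
    Integrable (fun r : ℝ => Complex.exp (Complex.I * p * r) * h r) :=
  hi.bdd_mul (c := 1) (by fun_prop) (Eventually.of_forall fun r => (norm_e p r).le)

lemma norm_Phi_integrand (ψ : ℝ → ℂ) (p r : ℝ) :
    ‖(Complex.exp (Complex.I * p * r) - 1) * (r : ℂ)⁻¹ * ψ r‖ ≤ |p| * ‖ψ r‖ := by
  rw [norm_mul, norm_mul]
  gcongr
  rw [norm_inv, Complex.norm_real, Real.norm_eq_abs]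
  rcases eq_or_ne r 0 with rfl | hr
  · simp
  · have hrp : 0 < |r| := abs_pos.2 hr
    rw [← div_eq_mul_inv, div_le_iff₀ hrp, ← abs_mul]
    exact norm_e_sub p r

lemma integrable_Phi {ψ : ℝ → ℂ} (hi : Integrable ψ) (p : ℝ) :
    Integrable (fun r : ℝ => (Complex.exp (Complex.I * p * r) - 1) * (r : ℂ)⁻¹ * ψ r) := by
  refine (hi.norm.const_mul |p|).mono' ?_ (Eventually.of_forall fun r => norm_Phi_integrand ψ p r)
  refine AEStronglyMeasurable.mul ?_ hi.aestronglyMeasurable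
  apply Measurable.aestronglyMeasurable
  fun_prop

lemma hasDerivAt_Phi {ψ : ℝ → ℂ} (hi : Integrable ψ) (p : ℝ) :
    HasDerivAt (Phi ψ) (Complex.I * Psi ψ p) p := by
  have h0 : ∀ᵐ r : ℝ, r ≠ 0 := by
    simp [ae_iff]
  have := (hasDerivAt_integral_of_dominated_loc_of_deriv_le (μ := volume) (x₀ := p)
    (F := fun (p : ℝ) (r : ℝ) => (Complex.exp (Complex.I * p * r) - 1) * (r : ℂ)⁻¹ * ψ r)
    (F' := fun (p : ℝ) (r : ℝ) => Complex.I * (Complex.exp (Complex.I * p * r) * ψ r))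
    (bound := fun r : ℝ => ‖ψ r‖) (s := Set.univ) univ_mem
    (Eventually.of_forall fun p => (integrable_Phi hi p).aestronglyMeasurable)
    (integrable_Phi hi p)
    ((integrable_e2 hi p).const_mul _).aestronglyMeasurable
    (Eventually.of_forall fun r p _ => by
      rw [norm_mul, norm_mul, norm_e, Complex.norm_I, one_mul, one_mul])
    hi.norm
    (by
      filter_upwards [h0] with r hr p _
      have hrc : (r : ℂ) ≠ 0 := by exact_mod_cast hr
      refine ((((hasDerivAt_e_left p r).sub_const 1).mul_const ((r : ℂ)⁻¹)).mul_const
        (ψ r)).congr_deriv ?_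
      field_simp)).2
  rw [integral_const_mul] at this
  exact this

lemma integrable_Psi (ψ : SchwartzMap ℝ ℂ) : Integrable (Psi ψ) := by
  have h1 : Integrable (FourierTransform.fourier ψ : SchwartzMap ℝ ℂ) := SchwartzMap.integrable _
  have h2 := h1.comp_mul_right' (R := -(2 * π)⁻¹) (by simp [Real.pi_ne_zero])
  refine h2.congr (Eventually.of_forall fun p => ?_)
  simp only [SchwartzMap.fourier_coe, Real.fourier_real_eq_integral_exp_smul, Psi, smul_eq_mul]
  congr 1
  funext r
  congr 2
  push_cast
  have : (π : ℂ) ≠ 0 := by exact_mod_cast Real.pi_ne_zero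
  field_simp

lemma Phi_bounded (ψ : SchwartzMap ℝ ℂ) : ∃ M : ℝ, ∀ p : ℝ, ‖Phi ψ p‖ ≤ M := by
  have hi := integrable_Psi ψ
  refine ⟨∫ p : ℝ, ‖Psi ψ p‖, fun p => ?_⟩
  have h1 := intervalIntegral.integral_eq_sub_of_hasDerivAt
    (fun x _ => hasDerivAt_Phi (ψ := ψ) ψ.integrable x)
    ((hi.const_mul Complex.I).intervalIntegrable (a := 0) (b := p))
  have h0 : Phi ψ 0 = 0 := by simp [Phi]
  rw [h0, sub_zero] at h1
  rw [← h1]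
  refine (intervalIntegral.norm_integral_le_integral_norm_uIoc).trans ?_
  simp only [norm_mul, Complex.norm_I, one_mul]
  exact setIntegral_le_integral hi.norm (Eventually.of_forall fun _ => norm_nonneg _)

lemma weight_le {ε : ℝ} (hε0 : 0 < ε) (hε1 : ε < 1) (r : ℝ) :
    |r| ^ ε * |r|⁻¹ ≤ Set.indicator (Set.Icc (-1 : ℝ) 1) (fun x : ℝ => |x| ^ (ε - 1)) r + 1 := by
  rcases eq_or_ne r 0 with rfl | hr
  · have : 0 ≤ Set.indicator (Set.Icc (-1 : ℝ) 1) (fun x : ℝ => |x| ^ (ε - 1)) 0 :=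
      Set.indicator_nonneg (fun x _ => by positivity) _
    simp only [abs_zero, inv_zero, mul_zero]
    linarith
  · have hrp : 0 < |r| := abs_pos.2 hr
    rw [← div_eq_mul_inv, ← Real.rpow_sub_one hrp.ne']
    by_cases hq : r ∈ Set.Icc (-1 : ℝ) 1
    · rw [Set.indicator_of_mem hq]
      linarith
    · rw [Set.indicator_of_notMem hq, zero_add]
      have h1 : 1 ≤ |r| := by
        by_contra h
        push Not at h
        exact hq (abs_le.1 h.le)
      exact Real.rpow_le_one_of_one_le_of_nonpos h1 (by linarith)

lemma integrable_weight {ε : ℝ} (hε0 : 0 < ε) (hε1 : ε < 1) (ψ : SchwartzMap ℝ ℂ) :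
    Integrable (fun r : ℝ => |r| ^ ε * (|r|⁻¹ * ‖ψ r‖)) := by
  obtain ⟨M, hM⟩ : ∃ M : ℝ, ∀ r, ‖ψ r‖ ≤ M := by
    obtain ⟨M, hM⟩ := ψ.decay 0 0
    exact ⟨M, fun r => by simpa using hM.2 r⟩
  have hM0 : 0 ≤ M := (norm_nonneg _).trans (hM 0)
  have hψc : Continuous ψ := ψ.continuous
  refine (((integrable_ind (ε - 1) (by linarith)).mul_const M).add
    (ψ.integrable (μ := volume)).norm).mono' ?_ (Eventually.of_forall fun r => ?_)
  · apply Measurable.aestronglyMeasurable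
    fun_prop
  · rw [Real.norm_of_nonneg (by positivity), ← mul_assoc, Pi.add_apply]
    have hind : 0 ≤ Set.indicator (Set.Icc (-1 : ℝ) 1) (fun x : ℝ => |x| ^ (ε - 1)) r :=
      Set.indicator_nonneg (fun x _ => by positivity) _
    calc |r| ^ ε * |r|⁻¹ * ‖ψ r‖
        ≤ (Set.indicator (Set.Icc (-1 : ℝ) 1) (fun x : ℝ => |x| ^ (ε - 1)) r + 1) * ‖ψ r‖ := by
          gcongr
          exact weight_le hε0 hε1 r
      _ = Set.indicator (Set.Icc (-1 : ℝ) 1) (fun x : ℝ => |x| ^ (ε - 1)) r * ‖ψ r‖ + ‖ψ r‖ := by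
          ring
      _ ≤ _ := by
          gcongr
          exact hM r

lemma parseval {ε : ℝ} (hε0 : 0 < ε) (hε1 : ε < 1) {F : ℝ → ℂ} {n : ℕ}
    (hd : Differentiable ℝ F) (H : Good ε n (deriv F))
    (htop : Tendsto F atTop (𝓝 0)) (hbot : Tendsto F atBot (𝓝 0)) (ψ : SchwartzMap ℝ ℂ) :
    ∫ r : ℝ, (((r : ℂ)⁻¹) ^ 1 * G (deriv F) r) * ψ r = -Complex.I * ∫ p : ℝ, F p * Psi ψ p := by
  have hψ : Integrable ψ := ψ.integrable
  have hψc : Continuous ψ := ψ.continuous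
  have hFi := H.integrable hε0
  obtain ⟨C, hC⟩ := H.bd0
  obtain ⟨M, hM⟩ := Phi_bounded ψ
  have hΨ := integrable_Psi ψ
  obtain ⟨B, hB⟩ : ∃ B : ℝ, ∀ p, ‖F p‖ ≤ B := by
    let F0 : ZeroAtInftyContinuousMap ℝ ℂ := ⟨⟨F, hd.continuous⟩, by
      rw [cocompact_eq_atBot_atTop]
      exact hbot.sup htop⟩
    exact ⟨‖F0.toBCF‖, fun p => F0.toBCF.norm_coe_le_norm p⟩
  have step1 : ∀ r : ℝ, (((r : ℂ)⁻¹) ^ 1 * G (deriv F) r) * ψ r =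
      ∫ p : ℝ, deriv F p * ((Complex.exp (Complex.I * p * r) - 1) * (r : ℂ)⁻¹ * ψ r) := by
    intro r
    rw [G_eq_sub hFi H.int0, pow_one, mul_comm, ← mul_assoc, ← integral_const_mul]
    congr 1
    funext p
    ring
  have hcont := H.cont
  have hprod : Integrable (Function.uncurry fun (p r : ℝ) =>
      deriv F p * ((Complex.exp (Complex.I * p * r) - 1) * (r : ℂ)⁻¹ * ψ r))
      (volume.prod volume) := by
    rw [integrable_prod_iff']
    · refine ⟨Eventually.of_forall fun r => ?_, ?_⟩
      · have := ((integrable_e hFi r).sub hFi).mul_const ((r : ℂ)⁻¹ * ψ r)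
        refine this.congr (Eventually.of_forall fun p => ?_)
        simp only [Function.uncurry, Pi.sub_apply]
        ring
      · have e : ∀ r : ℝ, ∫ p : ℝ, ‖Function.uncurry (fun (p r : ℝ) =>
            deriv F p * ((Complex.exp (Complex.I * p * r) - 1) * (r : ℂ)⁻¹ * ψ r)) (p, r)‖ =
            (∫ p : ℝ, ‖deriv F p‖ * ‖Complex.exp (Complex.I * p * r) - 1‖) * (|r|⁻¹ * ‖ψ r‖) := by
          intro r
          rw [← integral_mul_const]
          congr 1
          funext p
          simp only [Function.uncurry, norm_mul, norm_inv, Complex.norm_real, Real.norm_eq_abs]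
          ring
        simp only [e]
        refine ((integrable_weight hε0 hε1 ψ).const_mul (C * ∫ q, phi ε q)).mono' ?_
          (Eventually.of_forall fun r => ?_)
        · refine AEStronglyMeasurable.mul ?_ ?_
          · apply StronglyMeasurable.aestronglyMeasurable
            apply StronglyMeasurable.integral_prod_right'
              (f := fun z : ℝ × ℝ => ‖deriv F z.2‖ * ‖Complex.exp (Complex.I * z.2 * z.1) - 1‖)
            apply Continuous.stronglyMeasurable
            fun_prop
          · apply Measurable.aestronglyMeasurable
            fun_prop
        · rw [Real.norm_of_nonneg (by positivity)]
          rcases eq_or_ne r 0 with rfl | hr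
          · simp
          · rw [← mul_assoc (C * _)]
            exact mul_le_mul_of_nonneg_right (key_est ε hε0 hε1 _ C hC r hr) (by positivity)
    · apply Measurable.aestronglyMeasurable
      unfold Function.uncurry
      fun_prop
  simp only [step1]
  rw [← integral_integral_swap hprod]
  have step2 : ∀ p : ℝ, ∫ r : ℝ, deriv F p *
      ((Complex.exp (Complex.I * p * r) - 1) * (r : ℂ)⁻¹ * ψ r) = deriv F p * Phi ψ p := by
    intro p
    rw [integral_const_mul, Phi]
  simp only [step2]
  have hPc : Continuous (Phi ψ) :=
    continuous_iff_continuousAt.2 fun p => (hasDerivAt_Phi hψ p).continuousAt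
  have i1 : Integrable (fun p => deriv F p * Phi ψ p) :=
    hFi.mul_bdd (c := M) hPc.aestronglyMeasurable (Eventually.of_forall hM)
  have i2 : Integrable (fun p => F p * (Complex.I * Psi ψ p)) :=
    (hΨ.const_mul Complex.I).bdd_mul (c := B) hd.continuous.aestronglyMeasurable
      (Eventually.of_forall hB)
  have lim : ∀ l : Filter ℝ, Tendsto F l (𝓝 0) → Tendsto (fun p => F p * Phi ψ p) l (𝓝 0) := by
    intro l hl
    apply squeeze_zero_norm (a := fun p => ‖F p‖ * M)
    · intro p
      rw [norm_mul]
      gcongr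
      exact hM p
    · simpa using hl.norm.mul_const M
  have := integral_of_hasDerivAt_of_tendsto
    (fun p => (hd p).hasDerivAt.mul (hasDerivAt_Phi hψ p)) (i1.add i2) (lim _ hbot) (lim _ htop)
  rw [integral_add i1 i2] at this
  have e3 : ∫ p, F p * (Complex.I * Psi ψ p) = Complex.I * ∫ p, F p * Psi ψ p := by
    rw [← integral_const_mul]
    congr 1
    funext p
    ring
  rw [e3] at this
  linear_combination this

end Stmt6Aux

/-- higher-order version. If `f ∈ C^K` vanishes at `±∞` with
`|f^{(k)}(p)| ≤ C_k (1+|p|)^{-(k+ε)}` for `1 ≤ k ≤ K`, then its distributional inverse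
Fourier transform is a regular function `V`, of class `C^{K-1}` off the origin, with
`|V^{(k-1)}(r)| ≤ C'_k |r|^{ε-k}` for `1 ≤ k ≤ K`. -/
theorem stmt6 (K : ℕ) (hK : 1 ≤ K) (f : ℝ → ℂ) (Ck : ℕ → ℝ) (ε : ℝ)
    (hε0 : 0 < ε) (hε1 : ε < 1)
    (hf : ContDiff ℝ (K : ℕ∞) f)
    (htop : Tendsto f atTop (𝓝 0)) (hbot : Tendsto f atBot (𝓝 0))
    (hder : ∀ k : ℕ, 1 ≤ k → k ≤ K → ∀ p : ℝ,
      ‖iteratedDeriv k f p‖ ≤ Ck k * (1 + |p|) ^ (-((k : ℝ) + ε))) :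
    ∃ (V : ℝ → ℂ) (Ck' : ℕ → ℝ),
      LocallyIntegrable V ∧
      (∀ ψ : SchwartzMap ℝ ℂ,
        ∫ p : ℝ, f p * ((2 * π : ℝ)⁻¹ • ∫ r : ℝ, Complex.exp (Complex.I * p * r) * ψ r) =
          ∫ r : ℝ, V r * ψ r) ∧
      ContDiffOn ℝ ((K - 1 : ℕ) : ℕ∞) V {0}ᶜ ∧
      (∀ k : ℕ, 1 ≤ k → k ≤ K → ∀ r : ℝ, r ≠ 0 →
        ‖iteratedDerivWithin (k - 1) V {0}ᶜ r‖ ≤ Ck' k * |r| ^ (ε - (k : ℝ))) := by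
  obtain ⟨n, rfl⟩ : ∃ n, K = n + 1 := ⟨K - 1, by omega⟩
  set c : ℂ := Complex.I * ((2 * π : ℝ)⁻¹ : ℝ) with hc
  set F : ℝ → ℂ := fun p => c * f p with hF
  have hf' : ContDiff ℝ (n + 1 : ℕ) f := by exact_mod_cast hf
  have hFc : ContDiff ℝ (n + 1 : ℕ) F := contDiff_const.mul hf'
  have hFd : Differentiable ℝ F := hFc.differentiable (by exact_mod_cast Nat.succ_ne_zero n)
  have hFtop : Tendsto F atTop (𝓝 0) := by simpa using htop.const_mul c
  have hFbot : Tendsto F atBot (𝓝 0) := by simpa using hbot.const_mul c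
  have hbd : ∀ j ≤ n, ∃ C : ℝ, ∀ p : ℝ,
      ‖iteratedDeriv j (deriv F) p‖ ≤ C * (1 + |p|) ^ (-(1 + j + ε)) := by
    intro j hj
    refine ⟨‖c‖ * Ck (j + 1), fun p => ?_⟩
    rw [← iteratedDeriv_succ', hF, iteratedDeriv_const_mul_field, norm_mul, mul_assoc]
    gcongr
    have := hder (j + 1) (by omega) (by omega) p
    push_cast at this
    rwa [add_comm (j : ℝ) 1] at this
  have hcd : ContDiff ℝ n (deriv F) := by
    have := hFc
    push_cast at this
    exact (contDiff_succ_iff_deriv.1 this).2.2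
  have hint : Integrable (deriv F) := by
    obtain ⟨C, hC⟩ := hbd 0 (Nat.zero_le _)
    exact ((Stmt6Aux.integrable_japanese ε hε0).const_mul C).mono'
      hcd.continuous.aestronglyMeasurable
      (Eventually.of_forall fun p => by simpa using hC p)
  have H : Stmt6Aux.Good ε n (deriv F) := by
    refine ⟨hcd, hbd, ?_⟩
    have := integral_of_hasDerivAt_of_tendsto (fun p => (hFd p).hasDerivAt) hint hFbot hFtop
    simpa using this
  obtain ⟨m1, m2⟩ := Stmt6Aux.Good.main hε0 hε1 n _ H 1
  choose! D hD using m2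
  refine ⟨fun r : ℝ => ((r : ℂ)⁻¹) ^ 1 * Stmt6Aux.G (deriv F) r, fun k => D (k - 1),
    ?_, ?_, ?_, ?_⟩
  · obtain ⟨C, hC⟩ := H.G_bound hε0 hε1
    have hC0 : 0 ≤ C := by
      have := (norm_nonneg _).trans (hC 1 one_ne_zero)
      simpa using this
    have hl : LocallyIntegrable (fun r : ℝ => C * (Set.indicator (Set.Icc (-1 : ℝ) 1)
        (fun x : ℝ => |x| ^ (ε - 1)) r + 1)) := by
      have h1 : LocallyIntegrable (Set.indicator (Set.Icc (-1 : ℝ) 1)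
        (fun x : ℝ => |x| ^ (ε - 1))) :=
        (Stmt6Aux.integrable_ind (ε - 1) (by linarith)).locallyIntegrable
      have h2 : LocallyIntegrable (fun _ : ℝ => (1 : ℝ)) := locallyIntegrable_const 1
      exact (h1.add h2).smul C
    refine hl.mono ?_ (Eventually.of_forall fun r => ?_)
    · apply Measurable.aestronglyMeasurable
      have := (Stmt6Aux.continuous_G hint).measurable
      fun_prop
    · refine le_trans ?_ (le_abs_self _)
      have hw := Stmt6Aux.weight_le hε0 hε1 r
      rw [pow_one, norm_mul, norm_inv, Complex.norm_real, Real.norm_eq_abs]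
      refine le_trans ?_ (mul_le_mul_of_nonneg_left hw hC0)
      rcases eq_or_ne r 0 with rfl | hr
      · simp
      · calc |r|⁻¹ * ‖Stmt6Aux.G (deriv F) r‖ ≤ |r|⁻¹ * (C * |r| ^ ε) := by
              gcongr; exact hC r hr
          _ = _ := by ring
  · intro ψ
    have := Stmt6Aux.parseval hε0 hε1 hFd H hFtop hFbot ψ
    rw [this, ← integral_const_mul]
    congr 1
    funext p
    change f p * ((2 * π : ℝ)⁻¹ • Stmt6Aux.Psi ψ p) = _
    rw [Complex.real_smul, hF, hc]
    linear_combination (f p * ((2 * π : ℝ)⁻¹ : ℝ) * Stmt6Aux.Psi ψ p) * Complex.I_sq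
  · exact_mod_cast m1
  · intro k hk1 hk2 r hr
    obtain ⟨j, rfl⟩ : ∃ j, k = j + 1 := ⟨k - 1, by omega⟩
    have := hD j (by omega) r hr
    simp only [Nat.add_sub_cancel]
    refine this.trans_eq ?_
    congr 2
    push_cast
    ring
end

section
/- Let f ∈ C^∞(ℝ, ℂ) satisfy f(±∞) = 0 and |f^{(k)}(p)| ≤ C_k (1+|p|)^{-(k+ε)} for all k ≥ 1 and some 0 < ε ≤ 1/2. Then the inverse Fourier transform of f is represented by a function V ∈ C^∞(ℝ \ {0}) satisfying, for every ℓ, k ≥ 0, the combined estimate |V^{(k)}(r)| ≤ C_{ℓ,k} |r|^{ε-k-1} (1+|r|)^{-ℓ} for all r ≠ 0. -/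
open Filter Real Topology MeasureTheory

noncomputable def EF (g : ℝ → ℂ) (r : ℝ) : ℂ := ∫ p : ℝ, Complex.exp (Complex.I * r * p) * g p

lemma norm_ker (r p : ℝ) : ‖Complex.exp (Complex.I * r * p)‖ = 1 := by
  have := Complex.norm_exp_I_mul_ofReal (r * p)
  rw [← this]; push_cast; ring_nf

lemma ker_cont : Continuous fun x : ℝ × ℝ => Complex.exp (Complex.I * x.1 * x.2) := by fun_prop

lemma ker_int {g : ℝ → ℂ} (hg : Integrable g) (r : ℝ) :
    Integrable fun p : ℝ => Complex.exp (Complex.I * r * p) * g p := by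
  refine hg.bdd_mul (c := 1) (Continuous.aestronglyMeasurable (by fun_prop)) ?_
  exact Eventually.of_forall fun p => (norm_ker r p).le

lemma EF_norm_le (g : ℝ → ℂ) (r : ℝ) : ‖EF g r‖ ≤ ∫ p, ‖g p‖ := by
  refine (norm_integral_le_integral_norm _).trans (le_of_eq ?_)
  congr 1; ext p; rw [norm_mul, norm_ker, one_mul]

lemma EF_cont {g : ℝ → ℂ} (hg : Integrable g) : Continuous (EF g) := by
  refine continuous_of_dominated (bound := fun p => ‖g p‖) (fun r => (ker_int hg r).1) ?_ hg.norm ?_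
  · intro r; refine Eventually.of_forall fun p => ?_
    rw [norm_mul, norm_ker, one_mul]
  · refine Eventually.of_forall fun p => ?_
    fun_prop

lemma EF_hasDerivAt {g : ℝ → ℂ} (hg : Integrable g) (hpg : Integrable fun p : ℝ => (p : ℂ) * g p)
    (r : ℝ) : HasDerivAt (EF g) (Complex.I * EF (fun p : ℝ => (p : ℂ) * g p) r) r := by
  have := (hasDerivAt_integral_of_dominated_loc_of_deriv_le (μ := volume) (𝕜 := ℝ)
    (F := fun (r : ℝ) (p : ℝ) => Complex.exp (Complex.I * r * p) * g p)
    (F' := fun (r : ℝ) (p : ℝ) => Complex.I * (Complex.exp (Complex.I * r * p) * (p * g p)))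
    (bound := fun p : ℝ => ‖(p : ℂ) * g p‖) (x₀ := r) (s := Set.univ) univ_mem
    (Eventually.of_forall fun r => (ker_int hg r).1) (ker_int hg r)
    ((ker_int hpg r).const_mul _).1 ?_ hpg.norm ?_).2
  · rw [EF, ← integral_const_mul]; exact this
  · refine Eventually.of_forall fun p x _ => ?_
    rw [norm_mul, norm_mul, norm_ker]; simp
  · refine Eventually.of_forall fun p x _ => ?_
    have h1 : HasDerivAt (fun x : ℝ => Complex.I * (x : ℂ) * (p : ℂ)) (Complex.I * p) x := by
      have := (((hasDerivAt_id x).ofReal_comp).const_mul Complex.I).mul_const (p : ℂ)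
      simpa using this
    have h2 := (h1.cexp).mul_const (g p)
    exact h2.congr_deriv (by ring)

lemma EF_deriv {g g' : ℝ → ℂ} (hd : ∀ x, HasDerivAt g (g' x) x) (hg : Integrable g)
    (hg' : Integrable g') (r : ℝ) : EF g' r = - (Complex.I * r * EF g r) := by
  have h1 : ∀ p : ℝ, HasDerivAt (fun p : ℝ => Complex.exp (Complex.I * (r : ℂ) * (p : ℂ)))
      (Complex.exp (Complex.I * r * p) * (Complex.I * r)) p := by
    intro p
    have := (((hasDerivAt_id p).ofReal_comp).const_mul (Complex.I * (r : ℂ)))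
    simpa using this.cexp
  have := integral_mul_deriv_eq_deriv_mul_of_integrable (fun x _ => h1 x) (fun x _ => hd x)
    (ker_int hg' r) ?_ (ker_int hg r)
  · rw [EF, this, EF, ← integral_const_mul]
    congr 2; ext p; ring
  · refine ((ker_int hg r).const_mul (Complex.I * r)).congr (Eventually.of_forall fun p => ?_)
    simp only [Pi.mul_apply]; ring

lemma EF_fubini {g h : ℝ → ℂ} (hg : Integrable g) (hh : Integrable h) :
    ∫ r, EF g r * h r = ∫ p, g p * EF h p := by
  have e1 : ∀ r, EF g r * h r = ∫ p : ℝ, Complex.exp (Complex.I * r * p) * (g p * h r) := by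
    intro r; rw [EF, ← integral_mul_const]; congr 1; ext p; ring
  have e2 : ∀ p, g p * EF h p = ∫ r : ℝ, Complex.exp (Complex.I * r * p) * (g p * h r) := by
    intro p; rw [EF, ← integral_const_mul]; congr 1; ext r
    rw [mul_right_comm Complex.I]; ring
  simp_rw [e1, e2]
  apply integral_integral_swap
  have hp : Integrable (fun z : ℝ × ℝ => g z.2 * h z.1) (volume.prod volume) := by
    simpa [mul_comm] using hh.mul_prod hg
  refine hp.bdd_mul (c := 1) ker_cont.aestronglyMeasurable ?_
  exact Eventually.of_forall fun z => (norm_ker z.1 z.2).le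

lemma EF_fourier (g : ℝ → ℂ) (r : ℝ) :
    EF g r = FourierTransform.fourier g ((-(2 * π)⁻¹) * r) := by
  rw [Real.fourier_real_eq_integral_exp_smul, EF]
  congr 1; ext p
  rw [smul_eq_mul]; congr 2
  push_cast
  have : (π : ℂ) ≠ 0 := by exact_mod_cast Real.pi_ne_zero
  field_simp

lemma EF_tendsto (g : ℝ → ℂ) : Tendsto (EF g) atTop (𝓝 0) := by
  have h := Real.zero_at_infty_fourier g
  rw [cocompact_eq_atBot_atTop] at h
  have h2 := h.mono_left le_sup_left
  have : EF g = fun r => FourierTransform.fourier g ((-(2 * π)⁻¹) * r) := funext (EF_fourier g)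
  rw [this]
  refine h2.comp (tendsto_id.const_mul_atTop_of_neg ?_)
  have := Real.pi_pos
  simp only [neg_lt_zero]; positivity

lemma EF_schwartz_int (ψ : SchwartzMap ℝ ℂ) : Integrable (EF ψ) := by
  have : EF ψ = fun r => FourierTransform.fourier (ψ : ℝ → ℂ) ((-(2 * π)⁻¹) * r) :=
    funext (EF_fourier ψ)
  rw [this]
  apply Integrable.comp_mul_left'
  · rw [← SchwartzMap.fourier_coe]; exact SchwartzMap.integrable _
  · have := Real.pi_pos
    simp only [ne_eq, neg_eq_zero]; positivity

structure SC (ε : ℝ) (f : ℝ → ℂ) : Prop where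
  smooth : ContDiff ℝ (⊤ : ℕ∞) f
  lim : Tendsto f (cocompact ℝ) (𝓝 0)
  dec : ∀ k : ℕ, 1 ≤ k → ∃ C : ℝ, 0 ≤ C ∧ ∀ p : ℝ,
    ‖iteratedDeriv k f p‖ ≤ C * (1 + |p|) ^ (-((k : ℝ) + ε))

lemma itd {f : ℝ → ℂ} (hf : ContDiff ℝ (⊤ : ℕ∞) f) (n : ℕ) (p : ℝ) :
    HasDerivAt (iteratedDeriv n f) (iteratedDeriv (n + 1) f p) p := by
  rw [iteratedDeriv_succ]
  refine DifferentiableAt.hasDerivAt ?_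
  exact (hf.differentiable_iteratedDeriv n (by exact_mod_cast ENat.natCast_lt_top n)) p

lemma itc {f : ℝ → ℂ} (hf : ContDiff ℝ (⊤ : ℕ∞) f) (n : ℕ) :
    Continuous (iteratedDeriv n f) := 
  continuous_iff_continuousAt.2 fun p => (itd hf n p).continuousAt

lemma w_int {s : ℝ} (hs : 1 < s) : Integrable fun p : ℝ => (1 + |p|) ^ (-s) := by
  have := integrable_one_add_norm (E := ℝ) (μ := volume) (r := s) (by simpa using hs)
  simpa using this

lemma SC.int {ε : ℝ} (hε : 0 < ε) {f : ℝ → ℂ} (h : SC ε f) {n : ℕ} (hn : 1 ≤ n) :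
    Integrable (iteratedDeriv n f) := by
  obtain ⟨C, _, hC⟩ := h.dec n hn
  have : (1 : ℝ) ≤ n := by exact_mod_cast hn
  exact ((w_int (s := n + ε) (by linarith)).const_mul C).mono'
    (itc h.smooth n).aestronglyMeasurable (Eventually.of_forall hC)

lemma w_mul (p s : ℝ) : |p| * (1 + |p|) ^ (-(s + 1)) ≤ (1 + |p|) ^ (-s) := by
  have h0 : 0 < 1 + |p| := by positivity
  have : (1 + |p|) ^ (-s) = (1 + |p|) * (1 + |p|) ^ (-(s + 1)) := by
    nth_rewrite 2 [← Real.rpow_one (1 + |p|)]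
    rw [← Real.rpow_add h0]
    ring_nf
  rw [this]; gcongr; linarith

lemma SC.pbound {ε : ℝ} {f : ℝ → ℂ} (h : SC ε f) (n : ℕ) :
    ∃ C : ℝ, 0 ≤ C ∧ ∀ p : ℝ,
    ‖(p : ℂ) * iteratedDeriv (n + 1) f p‖ ≤ C * (1 + |p|) ^ (-((n : ℝ) + ε)) := by
  obtain ⟨C, h0, hC⟩ := h.dec (n + 1) (by omega)
  refine ⟨C, h0, fun p => ?_⟩
  rw [norm_mul, Complex.norm_real, Real.norm_eq_abs]
  calc _ ≤ |p| * (C * (1 + |p|) ^ (-(((n + 1 : ℕ) : ℝ) + ε))) := by gcongr; exact hC p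
    _ = C * (|p| * (1 + |p|) ^ (-(((n : ℝ) + ε) + 1))) := by push_cast; ring_nf
    _ ≤ _ := by gcongr; exact w_mul _ _

lemma SC.pint {ε : ℝ} (hε : 0 < ε) {f : ℝ → ℂ} (h : SC ε f) {n : ℕ} (hn : 1 ≤ n) :
    Integrable (fun p : ℝ => (p : ℂ) * iteratedDeriv (n + 1) f p) := by
  obtain ⟨C, _, hC⟩ := h.pbound n
  have : (1 : ℝ) ≤ n := by exact_mod_cast hn
  have hc := itc h.smooth (n + 1)
  exact ((w_int (s := n + ε) (by linarith)).const_mul C).mono'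
    (Continuous.aestronglyMeasurable (by fun_prop)) (Eventually.of_forall hC)

noncomputable def Dop (c : ℝ) (f : ℝ → ℂ) : ℝ → ℂ := fun p => c * f p - p * deriv f p

lemma Dop_itd {f : ℝ → ℂ} (hf : ContDiff ℝ (⊤ : ℕ∞) f) (c : ℝ) (n : ℕ) :
    iteratedDeriv n (Dop c f) =
      fun p : ℝ => (c - n : ℂ) * iteratedDeriv n f p - p * iteratedDeriv (n + 1) f p := by
  induction n with
  | zero => ext p; simp [Dop, iteratedDeriv_one]
  | succ n ih =>
    rw [iteratedDeriv_succ, ih]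
    ext p
    have h1 := ((itd hf n p).const_mul (c - n : ℂ)).sub
      (((hasDerivAt_id p).ofReal_comp).mul (itd hf (n + 1) p))
    have h2 := h1.deriv
    simp only [id] at h2
    refine Eq.trans h2 ?_
    push_cast; ring

lemma SC.dop {ε : ℝ} (hε : 0 < ε) {f : ℝ → ℂ} (h : SC ε f) (c : ℝ) : SC ε (Dop c f) := by
  refine ⟨?_, ?_, ?_⟩
  · have : ContDiff ℝ (⊤ : ℕ∞) (deriv f) := by
      exact h.smooth.iterate_deriv 1
    unfold Dop
    have h3 : ContDiff ℝ (⊤ : ℕ∞) (fun p : ℝ => (p : ℂ)) := Complex.ofRealCLM.contDiff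
    exact (contDiff_const.mul h.smooth).sub (h3.mul this)
  · have h1 : Tendsto (fun p : ℝ => (p : ℂ) * deriv f p) (cocompact ℝ) (𝓝 0) := by
      obtain ⟨C, h0, hC⟩ := h.pbound 0
      refine squeeze_zero_norm (a := fun p : ℝ => C * (1 + |p|) ^ (-ε)) ?_ ?_
      · intro p; simpa [iteratedDeriv_one] using hC p
      · have : Tendsto (fun p : ℝ => 1 + |p|) (cocompact ℝ) atTop :=
          tendsto_atTop_add_const_left _ _ (tendsto_norm_cocompact_atTop (E := ℝ))
        simpa using ((tendsto_rpow_neg_atTop hε).comp this).const_mul C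
    have h4 := (h.lim.const_mul (c : ℂ)).sub h1
    rw [mul_zero, sub_zero] at h4
    exact h4
  · intro k hk
    obtain ⟨C, h0, hC⟩ := h.dec k hk
    obtain ⟨C', h0', hC'⟩ := h.pbound k
    refine ⟨‖(c - k : ℂ)‖ * C + C', by positivity, fun p => ?_⟩
    rw [Dop_itd h.smooth]
    refine (norm_sub_le _ _).trans ?_
    rw [norm_mul, add_mul, mul_assoc]
    gcongr
    · exact hC p
    · exact hC' p

noncomputable def VF (f : ℝ → ℂ) (r : ℝ) : ℂ :=
  ((2 * π : ℝ)⁻¹ : ℝ) * (Complex.I / r * EF (iteratedDeriv 1 f) r)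

lemma SC.EF_step {ε : ℝ} (hε : 0 < ε) {f : ℝ → ℂ} (h : SC ε f) {n : ℕ} (hn : 1 ≤ n)
    {r : ℝ} (hr : r ≠ 0) :
    EF (iteratedDeriv n f) r = Complex.I / r * EF (iteratedDeriv (n + 1) f) r := by
  rw [EF_deriv (itd h.smooth n) (h.int hε hn) (h.int hε (by omega))]
  have : (r : ℂ) ≠ 0 := by exact_mod_cast hr
  field_simp
  rw [Complex.I_sq]; ring

lemma SC.EF_iter {ε : ℝ} (hε : 0 < ε) {f : ℝ → ℂ} (h : SC ε f) (n : ℕ)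
    {r : ℝ} (hr : r ≠ 0) :
    EF (iteratedDeriv 1 f) r = (Complex.I / r) ^ n * EF (iteratedDeriv (n + 1) f) r := by
  induction n with
  | zero => simp
  | succ n ih => rw [ih, h.EF_step hε (by omega) hr, pow_succ]; ring

lemma SC.hasDerivAt {ε : ℝ} (hε : 0 < ε) {f : ℝ → ℂ} (h : SC ε f) (k : ℕ)
    {r : ℝ} (hr : r ≠ 0) :
    HasDerivAt (fun r : ℝ => ((r : ℂ) ^ k)⁻¹ * VF f r)
      (((r : ℂ) ^ (k + 1))⁻¹ * VF (Dop (-((k : ℝ) + 1)) f) r) r := by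
  have hrc : (r : ℂ) ≠ 0 := by exact_mod_cast hr
  have hE := EF_hasDerivAt (h.int hε (n := 2) (by omega)) (h.pint hε (n := 1) le_rfl) r
  have hpow : HasDerivAt (fun r : ℝ => ((r : ℂ) ^ (k + 2))) ((k + 2 : ℂ) * (r : ℂ) ^ (k + 1)) r := by
    have := ((hasDerivAt_id r).ofReal_comp).fun_pow (k + 2)
    simpa using this
  have hd := ((hpow.fun_inv (pow_ne_zero _ hrc)).mul hE).const_mul (-(((2 * π : ℝ)⁻¹ : ℝ) : ℂ))
  have hEq : EF (iteratedDeriv 1 (Dop (-((k : ℝ) + 1)) f)) r =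
      (-((k : ℂ) + 2)) * EF (iteratedDeriv 1 f) r - EF (fun p : ℝ => (p : ℂ) * iteratedDeriv 2 f p) r := by
    rw [Dop_itd h.smooth, EF, EF, EF, ← integral_const_mul, ← integral_sub]
    · congr 1; ext p; push_cast; ring
    · exact (ker_int (h.int hε le_rfl) r).const_mul _
    · exact ker_int (h.pint hε (n := 1) le_rfl) r
  have key := hd.congr_of_eventuallyEq (f₁ := fun r : ℝ => ((r : ℂ) ^ k)⁻¹ * VF f r) ?_
  · refine key.congr_deriv ?_
    rw [VF, hEq, h.EF_step hε le_rfl hr]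
    field_simp
    ring_nf
    simp only [Complex.I_sq]
    ring_nf
  · filter_upwards [isOpen_ne.mem_nhds hr] with x hx
    have hxc : (x : ℂ) ≠ 0 := by exact_mod_cast hx
    rw [VF, h.EF_step hε le_rfl hx]
    simp only [Pi.mul_apply]
    field_simp
    rw [Complex.I_sq]; ring

lemma SC.iterV {ε : ℝ} (hε : 0 < ε) {f : ℝ → ℂ} (h : SC ε f) (k : ℕ) :
    ∃ g, SC ε g ∧ ∀ r : ℝ, r ≠ 0 → iteratedDeriv k (VF f) r = ((r : ℂ) ^ k)⁻¹ * VF g r := by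
  induction k with
  | zero => exact ⟨f, h, by simp⟩
  | succ k ih =>
    obtain ⟨g, hg, hgV⟩ := ih
    refine ⟨Dop (-((k : ℝ) + 1)) g, hg.dop hε _, fun r hr => ?_⟩
    rw [iteratedDeriv_succ, ← (hg.hasDerivAt hε k hr).deriv]
    apply EventuallyEq.deriv_eq
    filter_upwards [isOpen_ne.mem_nhds hr] with x hx using hgV x hx

lemma SC.contDiffOn {ε : ℝ} (hε : 0 < ε) {f : ℝ → ℂ} (h : SC ε f) :
    ContDiffOn ℝ (⊤ : ℕ∞) (VF f) {0}ᶜ := by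
  refine contDiffOn_of_differentiableOn_deriv fun m _ => ?_
  refine DifferentiableOn.congr ?_ (iteratedDerivWithin_of_isOpen isOpen_compl_singleton)
  obtain ⟨g, hg, hgV⟩ := h.iterV hε m
  refine DifferentiableOn.congr (f := fun r : ℝ => ((r : ℂ) ^ m)⁻¹ * VF g r) ?_ hgV
  exact fun r hr => (hg.hasDerivAt hε m hr).differentiableAt.differentiableWithinAt

lemma even_int {F : ℝ → ℝ} (h1 : IntegrableOn F (Set.Ioc 0 1)) (h2 : IntegrableOn F (Set.Ioi 1)) :
    Integrable fun x : ℝ => F |x| := by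
  have h : IntegrableOn F (Set.Ioi 0) := by
    rw [← Set.Ioc_union_Ioi_eq_Ioi (zero_le_one' ℝ)]
    exact h1.union h2
  have hf : IntegrableOn (fun x : ℝ => F |x|) (Set.Ioi 0) := by
    refine h.congr_fun (fun x hx => ?_) measurableSet_Ioi
    rw [abs_of_pos hx]
  have int_Iic : IntegrableOn (fun x ↦ F |x|) (Set.Iic 0) := by
    rw [← Measure.map_neg_eq_self (volume : Measure ℝ)]
    let m : MeasurableEmbedding fun x : ℝ => -x := (Homeomorph.neg ℝ).measurableEmbedding
    rw [m.integrableOn_map_iff]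
    simp_rw [Function.comp_def, abs_neg, Set.neg_preimage, Set.neg_Iic, neg_zero]
    exact Iff.mpr integrableOn_Ici_iff_integrableOn_Ioi hf
  rw [← integrableOn_univ, ← Set.Iic_union_Ioi (a := (0 : ℝ))]
  exact int_Iic.union hf

lemma rpow_int_Ioc {a : ℝ} (ha : -1 < a) : IntegrableOn (fun x : ℝ => x ^ a) (Set.Ioc 0 1) := by
  have := intervalIntegral.intervalIntegrable_rpow' (a := 0) (b := 1) ha
  rwa [intervalIntegrable_iff_integrableOn_Ioc_of_le zero_le_one] at this

lemma kerW_int {ε : ℝ} (h0 : 0 < ε) (h1 : ε < 1) :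
    Integrable fun q : ℝ => |q| ^ (-(1 + ε)) * min 2 |q| := by
  refine even_int (F := fun x => x ^ (-(1 + ε)) * min 2 x) ?_ ?_
  · refine (rpow_int_Ioc (a := -ε) (by linarith)).mono' (by fun_prop) ?_
    filter_upwards [ae_restrict_mem measurableSet_Ioc] with x hx
    have hx0 := hx.1
    rw [Real.norm_of_nonneg (by positivity)]
    calc x ^ (-(1 + ε)) * min 2 x ≤ x ^ (-(1 + ε)) * x := by gcongr; exact min_le_right _ _
      _ = x ^ (-ε) := by
        nth_rewrite 2 [← Real.rpow_one x]
        rw [← Real.rpow_add hx0]; ring_nf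
  · refine ((integrableOn_Ioi_rpow_of_lt (a := -(1 + ε)) (by linarith) one_pos).mul_const 2).mono'
      (by fun_prop) ?_
    filter_upwards [ae_restrict_mem measurableSet_Ioi] with x hx
    have hx0 : 0 < x := one_pos.trans hx
    rw [Real.norm_of_nonneg (by positivity)]
    gcongr; exact min_le_left _ _

lemma wt_int {ε : ℝ} (h0 : 0 < ε) :
    Integrable fun r : ℝ => |r| ^ (ε - 1) * (1 + |r|) ^ (-(1 + ε)) := by
  refine even_int (F := fun x => x ^ (ε - 1) * (1 + x) ^ (-(1 + ε))) ?_ ?_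
  · refine (rpow_int_Ioc (a := ε - 1) (by linarith)).mono' (by fun_prop) ?_
    filter_upwards [ae_restrict_mem measurableSet_Ioc] with x hx
    have hx0 := hx.1
    rw [Real.norm_of_nonneg (by positivity)]
    refine mul_le_of_le_one_right (by positivity) ?_
    exact Real.rpow_le_one_of_one_le_of_nonpos (by linarith) (by linarith)
  · refine (integrableOn_Ioi_rpow_of_lt (a := -2) (by linarith) one_pos).mono'
      (by fun_prop) ?_
    filter_upwards [ae_restrict_mem measurableSet_Ioi] with x hx
    have hx0 : 0 < x := one_pos.trans hx
    rw [Real.norm_of_nonneg (by positivity)]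
    calc _ ≤ x ^ (ε - 1) * x ^ (-(1 + ε)) := by
          gcongr ?_ * ?_
          exact Real.rpow_le_rpow_of_nonpos hx0 (by linarith) (by linarith)
      _ = x ^ (-2 : ℝ) := by rw [← Real.rpow_add hx0]; ring_nf

lemma ker_sub_one (r p : ℝ) : ‖Complex.exp (Complex.I * r * p) - 1‖ ≤ min 2 |r * p| := by
  refine le_min ?_ ?_
  · refine (norm_sub_le _ _).trans ?_
    rw [norm_ker]; norm_num
  · have := Real.norm_exp_I_mul_ofReal_sub_one_le (x := r * p)
    rw [Real.norm_eq_abs] at this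
    rw [mul_assoc, ← Complex.ofReal_mul]; exact this

lemma SC.small {ε : ℝ} (hε : 0 < ε) (hε1 : ε < 1) {f : ℝ → ℂ} (h : SC ε f) :
    ∃ C : ℝ, 0 ≤ C ∧ ∀ r : ℝ, r ≠ 0 → ‖EF (iteratedDeriv 1 f) r‖ ≤ C * |r| ^ ε := by
  obtain ⟨C, h0, hC⟩ := h.dec 1 le_rfl
  set K := ∫ q : ℝ, |q| ^ (-(1 + ε)) * min 2 |q| with hK
  have hK0 : 0 ≤ K := integral_nonneg fun q => by positivity
  refine ⟨C * K, by positivity, fun r hr => ?_⟩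
  have hr0 : 0 < |r| := abs_pos.2 hr
  have hlim := h.lim
  rw [cocompact_eq_atBot_atTop] at hlim
  have hi := h.int hε (n := 1) le_rfl
  have hz : ∫ p, iteratedDeriv 1 f p = 0 := by
    have hd : ∀ x, HasDerivAt f (iteratedDeriv 1 f x) x := fun x => by
      simpa using itd h.smooth 0 x
    simpa using integral_of_hasDerivAt_of_tendsto hd hi
      (hlim.mono_left le_sup_left) (hlim.mono_left le_sup_right)
  have e1 : EF (iteratedDeriv 1 f) r =
      ∫ p : ℝ, (Complex.exp (Complex.I * r * p) - 1) * iteratedDeriv 1 f p := by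
    simp_rw [sub_mul, one_mul]
    rw [integral_sub (ker_int hi r) hi, hz, sub_zero, EF]
  have e2 : ∀ p : ℝ, |r * p| ^ (-(1 + ε)) * min 2 |r * p| =
      |r| ^ (-(1 + ε)) * (|p| ^ (-(1 + ε)) * min 2 |r * p|) := by
    intro p
    nth_rewrite 1 [abs_mul]
    rw [Real.mul_rpow (abs_nonneg _) (abs_nonneg _)]; ring
  have i2 := (kerW_int hε hε1).comp_mul_left' hr
  have e3 := Measure.integral_comp_mul_left (fun q : ℝ => |q| ^ (-(1 + ε)) * min 2 |q|) r
  simp only [e2] at i2 e3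
  rw [integral_const_mul, ← hK, smul_eq_mul, abs_inv] at e3
  have i3 : Integrable fun p : ℝ => |p| ^ (-(1 + ε)) * min 2 |r * p| := by
    rwa [integrable_const_mul_iff] at i2
    exact (Real.rpow_pos_of_pos hr0 _).ne'.isUnit
  have e4 : ∫ p : ℝ, |p| ^ (-(1 + ε)) * min 2 |r * p| = K * |r| ^ ε := by
    have hp := Real.rpow_pos_of_pos hr0 (-(1 + ε))
    apply mul_left_cancel₀ hp.ne'
    rw [e3, ← Real.rpow_neg_one]
    have : |r| ^ (-1 : ℝ) = |r| ^ (-(1 + ε)) * |r| ^ ε := by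
      rw [← Real.rpow_add hr0]; ring_nf
    rw [this]; ring
  rw [e1, mul_assoc, ← e4, ← integral_const_mul]
  refine norm_integral_le_of_norm_le (i3.const_mul C) ?_
  have : ∀ᵐ p : ℝ, p ≠ 0 := by simp [ae_iff]
  filter_upwards [this] with p hp
  have hp0 : 0 < |p| := abs_pos.2 hp
  rw [norm_mul]
  calc _ ≤ min 2 |r * p| * (C * (1 + |p|) ^ (-(((1 : ℕ) : ℝ) + ε))) := by
        gcongr
        · exact ker_sub_one r p
        · exact hC p
    _ ≤ min 2 |r * p| * (C * |p| ^ (-(1 + ε))) := by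
        rw [Nat.cast_one]
        gcongr min 2 |r * p| * (C * ?_)
        exact Real.rpow_le_rpow_of_nonpos hp0 (by linarith) (by linarith)
    _ = _ := by ring

lemma SC.bound {ε : ℝ} (hε : 0 < ε) (hε1 : ε < 1) {f : ℝ → ℂ} (h : SC ε f) (ℓ : ℕ) :
    ∃ C : ℝ, 0 ≤ C ∧ ∀ r : ℝ, r ≠ 0 →
      ‖VF f r‖ ≤ C * |r| ^ (ε - 1) * (1 + |r|) ^ (-(ℓ : ℝ)) := by
  obtain ⟨C, h0, hC⟩ := h.small hε hε1
  set K := ∫ p, ‖iteratedDeriv (ℓ + 1) f p‖ with hK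
  have hK0 : 0 ≤ K := integral_nonneg fun q => by positivity
  have hpi := Real.pi_pos
  refine ⟨(2 * π)⁻¹ * (C + K) * 2 ^ ℓ, by positivity, fun r hr => ?_⟩
  have hr0 : 0 < |r| := abs_pos.2 hr
  have hn : ‖VF f r‖ = (2 * π)⁻¹ * (|r|⁻¹ * ‖EF (iteratedDeriv 1 f) r‖) := by
    rw [VF, norm_mul, norm_mul, norm_div, Complex.norm_I, Complex.norm_real, Complex.norm_real,
      Real.norm_of_nonneg (by positivity), Real.norm_eq_abs, one_div]
  have hsplit : |r| ^ (ε - 1) = |r|⁻¹ * |r| ^ ε := by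
    rw [Real.rpow_sub hr0, Real.rpow_one]; field_simp
  rw [hn, Real.rpow_neg (by positivity), Real.rpow_natCast]
  rcases le_total |r| 1 with h1 | h1
  · calc _ ≤ (2 * π)⁻¹ * (|r|⁻¹ * (C * |r| ^ ε)) := by gcongr; exact hC r hr
      _ = (2 * π)⁻¹ * C * |r| ^ (ε - 1) * 1 := by rw [hsplit]; ring
      _ ≤ (2 * π)⁻¹ * (C + K) * |r| ^ (ε - 1) * (2 ^ ℓ * ((1 + |r|) ^ ℓ)⁻¹) := by
        gcongr
        · linarith
        · rw [← div_eq_mul_inv, le_div_iff₀ (by positivity), one_mul]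
          gcongr; linarith
      _ = _ := by ring
  · calc _ ≤ (2 * π)⁻¹ * (|r|⁻¹ * ((|r|⁻¹) ^ ℓ * K)) := by
          gcongr
          rw [h.EF_iter hε ℓ hr, norm_mul, norm_pow, norm_div, Complex.norm_I, Complex.norm_real,
            Real.norm_eq_abs, one_div]
          gcongr
          exact EF_norm_le _ _
      _ = (2 * π)⁻¹ * K * (|r|⁻¹ * 1) * (|r|⁻¹) ^ ℓ := by ring
      _ ≤ (2 * π)⁻¹ * (C + K) * |r| ^ (ε - 1) * (2 ^ ℓ * ((1 + |r|) ^ ℓ)⁻¹) := by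
        rw [hsplit]
        gcongr ?_ * (_ * ?_) * ?_
        · gcongr; linarith
        · exact Real.one_le_rpow h1 hε.le
        · rw [← inv_pow, ← mul_pow]
          gcongr
          rw [← div_eq_mul_inv, le_div_iff₀ (by positivity), inv_mul_le_iff₀ hr0]
          linarith
      _ = _ := by ring

lemma SC.VF_int {ε : ℝ} (hε : 0 < ε) (hε1 : ε < 1) {f : ℝ → ℂ} (h : SC ε f) :
    Integrable (VF f) := by
  obtain ⟨C, h0, hC⟩ := h.bound hε hε1 2
  have hm : Continuous (EF (iteratedDeriv 1 f)) := EF_cont (h.int hε le_rfl)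
  refine ((wt_int hε).const_mul C).mono' ?_ ?_
  · refine Measurable.aestronglyMeasurable ?_
    unfold VF
    have := hm.measurable
    fun_prop
  · have : ∀ᵐ p : ℝ, p ≠ 0 := by simp [ae_iff]
    filter_upwards [this] with r hr
    refine (hC r hr).trans ?_
    rw [mul_assoc]
    gcongr
    · linarith [abs_nonneg r]
    · push_cast; linarith

lemma SC.bdd {ε : ℝ} {f : ℝ → ℂ} (h : SC ε f) : ∃ C : ℝ, ∀ p, ‖f p‖ ≤ C := by
  let F : ZeroAtInftyContinuousMap ℝ ℂ := ⟨⟨f, h.smooth.continuous⟩, h.lim⟩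
  exact ⟨‖F.toBCF‖, fun p => F.toBCF.norm_coe_le_norm p⟩

lemma SC.pair0 {ε : ℝ} (hε : 0 < ε) {f : ℝ → ℂ} (h : SC ε f)
    {φ ψ : ℝ → ℂ} (hφ : Integrable φ) (hψ : Integrable ψ) (hE : Integrable (EF ψ))
    (hr : ∀ r : ℝ, (r : ℂ) * φ r = ψ r) :
    ∫ r, VF f r * ψ r = ((2 * π : ℝ)⁻¹ : ℝ) * ∫ p, f p * EF ψ p := by
  have hi := h.int hε (n := 1) le_rfl
  have hψ' : (fun r : ℝ => (r : ℂ) * φ r) = ψ := funext hr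
  have hd : ∀ x, HasDerivAt f (iteratedDeriv 1 f x) x := fun x => by
    simpa using itd h.smooth 0 x
  have hdφ : ∀ p, HasDerivAt (EF φ) (Complex.I * EF ψ p) p := fun p => by
    have := EF_hasDerivAt hφ (by rw [hψ']; exact hψ) p
    rwa [hψ'] at this
  obtain ⟨C, hC⟩ := h.bdd
  have hfE : Integrable fun p => f p * EF ψ p :=
    hE.bdd_mul (c := C) h.smooth.continuous.aestronglyMeasurable (Eventually.of_forall hC)
  have e1 : ∫ r, VF f r * ψ r =
      ∫ r, (((2 * π : ℝ)⁻¹ : ℝ) * Complex.I : ℂ) * (EF (iteratedDeriv 1 f) r * φ r) := by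
    refine integral_congr_ae ?_
    have : ∀ᵐ p : ℝ, p ≠ 0 := by simp [ae_iff]
    filter_upwards [this] with r hr0
    have hrc : (r : ℂ) ≠ 0 := by exact_mod_cast hr0
    rw [VF, ← hr]; field_simp
  have hlim := h.lim
  rw [cocompact_eq_atBot_atTop] at hlim
  have ht : Tendsto (f * EF φ) (atBot ⊔ atTop) (𝓝 0) := by
    refine squeeze_zero_norm (a := fun p => ‖f p‖ * ∫ q, ‖φ q‖) ?_ ?_
    · intro p; rw [Pi.mul_apply, norm_mul]; gcongr; exact EF_norm_le _ _
    · simpa using hlim.norm.mul_const (∫ q, ‖φ q‖)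
  have e2 := integral_mul_deriv_eq_deriv_mul (u := f) (v := EF φ) (fun x _ => hd x)
    (fun x _ => hdφ x) ?_ ?_ (ht.mono_left le_sup_left) (ht.mono_left le_sup_right)
  · rw [e1, integral_const_mul, EF_fubini hi hφ]
    have e3 : ∫ p, iteratedDeriv 1 f p * EF φ p = - (Complex.I * ∫ p, f p * EF ψ p) := by
      rw [← integral_const_mul]
      rw [sub_zero, zero_sub] at e2
      rw [eq_neg_iff_add_eq_zero, ← eq_neg_iff_add_eq_zero.1 e2, add_comm]
      congr 2; ext p; ring
    rw [e3]
    linear_combination (-(((2 * π : ℝ)⁻¹ : ℝ) : ℂ) * ∫ p, f p * EF ψ p) * Complex.I_sq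
  · refine (hfE.const_mul Complex.I).congr (Eventually.of_forall fun p => ?_)
    simp only [Pi.mul_apply]; ring
  · refine hi.mul_bdd (c := ∫ q, ‖φ q‖) (EF_cont hφ).aestronglyMeasurable ?_
    exact Eventually.of_forall fun p => EF_norm_le _ _

lemma SC.pair {ε : ℝ} (hε : 0 < ε) (hε1 : ε < 1) {f : ℝ → ℂ} (h : SC ε f) (ψ : SchwartzMap ℝ ℂ) :
    ∫ r, VF f r * ψ r = ((2 * π : ℝ)⁻¹ : ℝ) * ∫ p, f p * EF ψ p := by
  have hψ : Integrable (ψ : ℝ → ℂ) := ψ.integrable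
  have hE := EF_schwartz_int ψ
  obtain ⟨C, hC⟩ := h.bdd
  have hVψ : Integrable fun r => VF f r * ψ r := by
    exact (h.VF_int hε hε1).mul_bdd (c := ‖ψ.toBoundedContinuousFunction‖) ψ.continuous.aestronglyMeasurable
      (Eventually.of_forall fun r => ψ.toBoundedContinuousFunction.norm_coe_le_norm r)
  have hfE : Integrable fun p => f p * EF ψ p :=
    hE.bdd_mul (c := C) h.smooth.continuous.aestronglyMeasurable (Eventually.of_forall hC)
  -- translated identity
  have key : ∀ T : ℝ, (∫ r, VF f r * ψ r) - EF (fun r => VF f r * ψ r) T =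
      ((2 * π : ℝ)⁻¹ : ℝ) * ((∫ p, f p * EF ψ p) - ∫ p, f (p - T) * EF ψ p) := by
    intro T
    have hψT := ker_int hψ T
    have hEs : ∀ p, EF (fun r : ℝ => ψ r - Complex.exp (Complex.I * T * r) * ψ r) p
        = EF ψ p - EF ψ (p + T) := by
      intro p
      rw [EF, EF, EF, ← integral_sub (ker_int hψ p) (ker_int hψ (p + T))]
      congr 1; ext r
      rw [mul_sub, ← mul_assoc, ← Complex.exp_add]; push_cast; ring_nf
    have hET : Integrable fun p => EF ψ (p + T) := hE.comp_add_right T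
    have hfET : Integrable fun p => f p * EF ψ (p + T) :=
      hET.bdd_mul (c := C) h.smooth.continuous.aestronglyMeasurable (Eventually.of_forall hC)
    have := h.pair0 hε (φ := fun r : ℝ => (ψ r - Complex.exp (Complex.I * T * r) * ψ r) / r)
      (ψ := fun r : ℝ => ψ r - Complex.exp (Complex.I * T * r) * ψ r) ?_ (hψ.sub hψT) ?_ ?_
    · simp_rw [hEs, mul_sub] at this
      rw [integral_sub hVψ, integral_sub hfE hfET] at this
      · have e1 : EF (fun r => VF f r * ψ r) T =
            ∫ r : ℝ, VF f r * (Complex.exp (Complex.I * T * r) * ψ r) := by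
          rw [EF]; congr 1; ext r; ring
        have e2 : ∫ p, f (p - T) * EF ψ p = ∫ p, f p * EF ψ (p + T) := by
          rw [← integral_add_right_eq_self (fun p => f (p - T) * EF ψ p) T]
          simp
        rw [e1, e2]; exact this
      · refine (ker_int hVψ T).congr (Eventually.of_forall fun r => ?_)
        simp only []; ring
    · refine (hψ.norm.const_mul |T|).mono' ?_ ?_
      · have := ψ.continuous.measurable
        exact Measurable.aestronglyMeasurable (by fun_prop)
      · refine Eventually.of_forall fun r => ?_
        rcases eq_or_ne r 0 with rfl | hr
        · simp; positivity
        · have hr0 : 0 < |r| := abs_pos.2 hr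
          rw [norm_div, Complex.norm_real, Real.norm_eq_abs, div_le_iff₀ hr0]
          have e : ψ r - Complex.exp (Complex.I * T * r) * ψ r =
            -((Complex.exp (Complex.I * T * r) - 1) * ψ r) := by ring
          rw [e, norm_neg, norm_mul]
          calc _ ≤ |T * r| * ‖ψ r‖ := by
                gcongr; exact (ker_sub_one T r).trans (min_le_right _ _)
            _ = _ := by rw [abs_mul]; ring
    · have : EF (fun r : ℝ => ψ r - Complex.exp (Complex.I * T * r) * ψ r) =
        fun p => EF ψ p - EF ψ (p + T) := funext hEs
      rw [this]; exact hE.sub hET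
    · intro r
      rcases eq_or_ne r 0 with rfl | hr
      · simp
      · have hrc : (r : ℂ) ≠ 0 := by exact_mod_cast hr
        field_simp
  have t1 : Tendsto (fun T => ∫ p, f (p - T) * EF ψ p) atTop (𝓝 0) := by
    have hlim := h.lim
    rw [cocompact_eq_atBot_atTop] at hlim
    have hbot := hlim.mono_left le_sup_left
    have := tendsto_integral_filter_of_dominated_convergence (μ := volume) (l := (atTop : Filter ℝ))
      (F := fun T p => f (p - T) * EF ψ p) (f := fun _ => 0)
      (fun p => C * ‖EF ψ p‖) ?_ ?_ (hE.norm.const_mul C) ?_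
    · simpa using this
    · refine Eventually.of_forall fun T => ?_
      have h1 := h.smooth.continuous
      have h2 := EF_cont hψ
      exact Continuous.aestronglyMeasurable (by fun_prop)
    · refine Eventually.of_forall fun T => Eventually.of_forall fun p => ?_
      rw [norm_mul]; gcongr; exact hC _
    · refine Eventually.of_forall fun p => ?_
      have hs : Tendsto (fun T : ℝ => p - T) atTop atBot := by
        simpa [sub_eq_add_neg] using tendsto_atBot_add_const_left _ p tendsto_neg_atTop_atBot
      simpa using (hbot.comp hs).mul_const (EF ψ p)
  have t2 := EF_tendsto (fun r => VF f r * ψ r)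
  have l1 := t2.const_sub (∫ r, VF f r * ψ r)
  have l2 := (t1.const_sub (∫ p, f p * EF ψ p)).const_mul (((2 * π : ℝ)⁻¹ : ℝ) : ℂ)
  simp_rw [key] at l1
  have := tendsto_nhds_unique l1 l2
  simpa using this



/-- if `f ∈ C^∞` vanishes at `±∞` with `|f^{(k)}(p)| ≤ C_k (1+|p|)^{-(k+ε)}`
for all `k ≥ 1` and `0 < ε ≤ 1/2`, then the distributional inverse Fourier transform of
`f` is represented by `V ∈ C^∞(ℝ \ {0})` with the combined estimate
`|V^{(k)}(r)| ≤ C_{ℓ,k} |r|^{ε-k-1} (1+|r|)^{-ℓ}`. -/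
theorem stmt8 (f : ℝ → ℂ) (Ck : ℕ → ℝ) (ε : ℝ) (hε0 : 0 < ε) (hε1 : ε ≤ 1/2)
    (hf : ContDiff ℝ (⊤ : ℕ∞) f)
    (htop : Tendsto f atTop (𝓝 0)) (hbot : Tendsto f atBot (𝓝 0))
    (hder : ∀ k : ℕ, 1 ≤ k → ∀ p : ℝ,
      ‖iteratedDeriv k f p‖ ≤ Ck k * (1 + |p|) ^ (-((k : ℝ) + ε))) :
    ∃ V : ℝ → ℂ,
      LocallyIntegrable V ∧
      (∀ ψ : SchwartzMap ℝ ℂ,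
        ∫ p : ℝ, f p * ((2 * π : ℝ)⁻¹ • ∫ r : ℝ, Complex.exp (Complex.I * p * r) * ψ r) =
          ∫ r : ℝ, V r * ψ r) ∧
      ContDiffOn ℝ (⊤ : ℕ∞) V {0}ᶜ ∧
      (∀ ℓ k : ℕ, ∃ Clk : ℝ, ∀ r : ℝ, r ≠ 0 →
        ‖iteratedDerivWithin k V {0}ᶜ r‖ ≤ Clk * |r| ^ (ε - (k : ℝ) - 1) * (1 + |r|) ^ (-(ℓ : ℝ))) := by
  have hε : ε < 1 := by linarith
  have h : SC ε f := by
    refine ⟨hf, ?_, fun k hk => ⟨|Ck k|, abs_nonneg _, fun p => (hder k hk p).trans ?_⟩⟩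
    · rw [cocompact_eq_atBot_atTop]; exact hbot.sup htop
    · gcongr; exact le_abs_self _
  refine ⟨VF f, (h.VF_int hε0 hε).locallyIntegrable, fun ψ => ?_, h.contDiffOn hε0, fun ℓ k => ?_⟩
  · rw [h.pair hε0 hε ψ, ← integral_const_mul]
    congr 1; ext p
    rw [Complex.real_smul, EF]; ring
  · obtain ⟨g, hg, hgV⟩ := h.iterV hε0 k
    obtain ⟨C, h0, hC⟩ := hg.bound hε0 hε ℓ
    refine ⟨C, fun r hr => ?_⟩
    have hr0 : 0 < |r| := abs_pos.2 hr
    rw [iteratedDerivWithin_of_isOpen isOpen_compl_singleton hr, hgV r hr, norm_mul, norm_inv,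
      norm_pow, Complex.norm_real, Real.norm_eq_abs]
    calc _ ≤ (|r| ^ k)⁻¹ * (C * |r| ^ (ε - 1) * (1 + |r|) ^ (-(ℓ : ℝ))) := by
          gcongr; exact hC r hr
      _ = _ := by
        have : ε - (k : ℝ) - 1 = (ε - 1) - k := by ring
        rw [this, Real.rpow_sub hr0 (ε - 1), Real.rpow_natCast]
        field_simp
end
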